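/- arXiv:2205.11904 — 2 statements merged into one kernel-verified Lean document; each statement's English description precedes it below -/
import Mathlib

section
/- Let (X,T) be a topological dynamical system with a compatible metric d. Then for every ε>0 and every ergodic T-invariant Borel probability measure μ, PS_μ(T,d,6ε) ≤ R_{μ,L∞}(ε); equivalently, PS_μ(T,d,ε) ≤ R_{μ,L∞}(ε/6). -/
open Filter MeasureTheory Set
open scoped ENNReal Topology

noncomputable section

namespace MMD

variable {X : Type*}

/-- The `n`-th Bowen metric `d_n(x,y) = max_{0 ≤ j ≤ n-1} d(T^j x, T^j y)`. -/
noncomputable def bowenDist [PseudoMetricSpace X] (T : X → X) (n : ℕ) (x y : X) : ℝ :=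
  ⨆ j : Fin n, dist (T^[(j : ℕ)] x) (T^[(j : ℕ)] y)

/-- `r_n(T,d,ε,Z)`: minimal cardinality of an `(n,ε)`-spanning set of `Z`. -/
noncomputable def spanNum [PseudoMetricSpace X] (T : X → X) (n : ℕ) (ε : ℝ) (Z : Set X) : ℕ :=
  sInf {k | ∃ E : Finset X, E.card = k ∧ ∀ z ∈ Z, ∃ y ∈ E, bowenDist T n z y < ε}

/-- `s_n(T,d,ε,Z)`: maximal cardinality of an `(n,ε)`-separated subset of `Z`. -/
noncomputable def sepNum [PseudoMetricSpace X] (T : X → X) (n : ℕ) (ε : ℝ) (Z : Set X) : ℕ :=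
  sSup {k | ∃ F : Finset X, ↑F ⊆ Z ∧ F.card = k ∧
    ∀ x ∈ F, ∀ y ∈ F, x ≠ y → ε ≤ bowenDist T n x y}

/-- `limsup_{n→∞} (1/n) log r_n(T,d,ε,X)`. -/
noncomputable def spanGrowth [PseudoMetricSpace X] (T : X → X) (ε : ℝ) : ℝ≥0∞ :=
  Filter.limsup (fun n : ℕ => ENNReal.ofReal (Real.log (spanNum T n ε Set.univ)) / (n : ℝ≥0∞))
    Filter.atTop

/-- Upper metric mean dimension. -/
noncomputable def mdimMUpper [PseudoMetricSpace X] (T : X → X) : ℝ≥0∞ :=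
  Filter.limsup (fun ε : ℝ => spanGrowth T ε / ENNReal.ofReal (Real.log (1 / ε)))
    (nhdsWithin 0 (Set.Ioi 0))

/-- Lower metric mean dimension. -/
noncomputable def mdimMLower [PseudoMetricSpace X] (T : X → X) : ℝ≥0∞ :=
  Filter.liminf (fun ε : ℝ => spanGrowth T ε / ENNReal.ofReal (Real.log (1 / ε)))
    (nhdsWithin 0 (Set.Ioi 0))

/-- A finite (Borel) partition given as a finite set of measurable, pairwise disjoint sets
covering the space. -/
def IsFinPartition {Y : Type*} [MeasurableSpace Y] (P : Finset (Set Y)) : Prop :=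
  (∀ s ∈ P, MeasurableSet s) ∧ (∀ s ∈ P, ∀ t ∈ P, s ≠ t → Disjoint s t) ∧
    ⋃₀ (P : Set (Set Y)) = Set.univ

/-- Mutual information `I(ξ;η)` of two random variables, as the supremum over finite
measurable partitions of the target spaces. -/
noncomputable def mutualInfo {Ω A B : Type*} [MeasurableSpace Ω] [MeasurableSpace A]
    [MeasurableSpace B] (P : Measure Ω) (ξ : Ω → A) (η : Ω → B) : ℝ≥0∞ :=
  ⨆ (p : Finset (Set A)) (_ : IsFinPartition p) (q : Finset (Set B)) (_ : IsFinPartition q),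
    ENNReal.ofReal (∑ s ∈ p, ∑ t ∈ q,
      (P (ξ ⁻¹' s ∩ η ⁻¹' t)).toReal *
        Real.log ((P (ξ ⁻¹' s ∩ η ⁻¹' t)).toReal /
          ((P (ξ ⁻¹' s)).toReal * (P (η ⁻¹' t)).toReal)))

/-- The `L^∞` rate distortion function `R_{μ,L∞}(ε,s)`: the infimum of `I(ξ;η)/n` over all
`n ≥ 1` and all joint distributions `ν` of `(ξ, (η_0,…,η_{n-1}))` such that `ξ` has law `μ`,
the `η_k` take (almost surely) finitely many values, and
`E(#{0 ≤ k ≤ n-1 : d(T^k ξ, η_k) ≥ ε}) < s n`. -/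
noncomputable def RDistLInftyS [PseudoMetricSpace X] [MeasurableSpace X] (T : X → X)
    (μ : Measure X) (ε s : ℝ) : ℝ≥0∞ :=
  ⨅ (n : ℕ) (_ : 0 < n) (ν : Measure (X × (Fin n → X))) (_ : IsProbabilityMeasure ν)
    (_ : ν.map Prod.fst = μ) (_ : ∃ S : Finset X, ν {p | ∀ k, p.2 k ∈ S} = 1)
    (_ : ∫⁻ p, (Nat.card {k : Fin n // ε ≤ dist (T^[(k : ℕ)] p.1) (p.2 k)} : ℝ≥0∞) ∂ν
        < ENNReal.ofReal (s * n)),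
    mutualInfo ν Prod.fst Prod.snd / (n : ℝ≥0∞)

/-- `R_{μ,L∞}(ε) = lim_{s→0} R_{μ,L∞}(ε,s)` (the limit equals the supremum over `s > 0`
by monotonicity). -/
noncomputable def RDistLInfty [PseudoMetricSpace X] [MeasurableSpace X] (T : X → X)
    (μ : Measure X) (ε : ℝ) : ℝ≥0∞ :=
  ⨆ (s : ℝ) (_ : 0 < s), RDistLInftyS T μ ε s

/-- The `L¹` rate distortion function `R_{μ,1}(ε)`. -/
noncomputable def RDistL1 [PseudoMetricSpace X] [MeasurableSpace X] (T : X → X)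
    (μ : Measure X) (ε : ℝ) : ℝ≥0∞ :=
  ⨅ (n : ℕ) (_ : 0 < n) (ν : Measure (X × (Fin n → X))) (_ : IsProbabilityMeasure ν)
    (_ : ν.map Prod.fst = μ) (_ : ∃ S : Finset X, ν {p | ∀ k, p.2 k ∈ S} = 1)
    (_ : ∫⁻ p, ∑ k : Fin n, ENNReal.ofReal (dist (T^[(k : ℕ)] p.1) (p.2 k)) ∂ν
        < ENNReal.ofReal (ε * n)),
    mutualInfo ν Prod.fst Prod.snd / (n : ℝ≥0∞)

/-- `R^δ_μ(T,n,ε)`: minimal number of Bowen `(n,ε)`-balls whose union has `μ`-measure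
greater than `1 - δ`. -/
noncomputable def katokNum [PseudoMetricSpace X] [MeasurableSpace X] (T : X → X)
    (μ : Measure X) (n : ℕ) (ε δ : ℝ) : ℕ :=
  sInf {k | ∃ E : Finset X, E.card = k ∧
    ENNReal.ofReal (1 - δ) < μ (⋃ x ∈ E, {y | bowenDist T n x y < ε})}

/-- `h̄^K_μ(T,ε,δ)`. -/
noncomputable def katokUpperD [PseudoMetricSpace X] [MeasurableSpace X] (T : X → X)
    (μ : Measure X) (ε δ : ℝ) : ℝ≥0∞ :=
  Filter.limsup (fun n : ℕ => ENNReal.ofReal (Real.log (katokNum T μ n ε δ)) / (n : ℝ≥0∞))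
    Filter.atTop

/-- `ḥ^K_μ(T,ε,δ)`. -/
noncomputable def katokLowerD [PseudoMetricSpace X] [MeasurableSpace X] (T : X → X)
    (μ : Measure X) (ε δ : ℝ) : ℝ≥0∞ :=
  Filter.liminf (fun n : ℕ => ENNReal.ofReal (Real.log (katokNum T μ n ε δ)) / (n : ℝ≥0∞))
    Filter.atTop

/-- `h̄^K_μ(T,ε) = lim_{δ→0} h̄^K_μ(T,ε,δ)` (equal to the supremum over `δ ∈ (0,1)` by
monotonicity). -/
noncomputable def katokUpper [PseudoMetricSpace X] [MeasurableSpace X] (T : X → X)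
    (μ : Measure X) (ε : ℝ) : ℝ≥0∞ :=
  ⨆ (δ : ℝ) (_ : δ ∈ Set.Ioo (0 : ℝ) 1), katokUpperD T μ ε δ

/-- `ḥ^K_μ(T,ε) = lim_{δ→0} ḥ^K_μ(T,ε,δ)`. -/
noncomputable def katokLower [PseudoMetricSpace X] [MeasurableSpace X] (T : X → X)
    (μ : Measure X) (ε : ℝ) : ℝ≥0∞ :=
  ⨆ (δ : ℝ) (_ : δ ∈ Set.Ioo (0 : ℝ) 1), katokLowerD T μ ε δ

/-- The empirical measure `(1/n) Σ_{j=0}^{n-1} δ_{T^j x}`. -/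
noncomputable def empMeas [MeasurableSpace X] (T : X → X) (n : ℕ) (x : X) : Measure X :=
  (n : ℝ≥0∞)⁻¹ • ∑ j ∈ Finset.range n, Measure.dirac (T^[j] x)

/-- Pfister–Sullivan entropy `PS_μ(T,d,ε)`: infimum over weak* open neighborhoods `F` of `μ`
of `limsup_n (1/n) log s_n(T,d,ε,X_{n,F})`, where
`X_{n,F} = {x : (1/n) Σ_{j<n} δ_{T^j x} ∈ F}`. -/
noncomputable def PSent [MetricSpace X] [MeasurableSpace X] [OpensMeasurableSpace X]
    (T : X → X) (μ : ProbabilityMeasure X) (ε : ℝ) : ℝ≥0∞ :=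
  ⨅ (F : Set (ProbabilityMeasure X)) (_ : IsOpen F) (_ : μ ∈ F),
    Filter.limsup (fun n : ℕ => ENNReal.ofReal (Real.log (sepNum T n ε
      {x : X | ∃ h : IsProbabilityMeasure (empMeas T n x),
        (⟨empMeas T n x, h⟩ : ProbabilityMeasure X) ∈ F})) / (n : ℝ≥0∞)) Filter.atTop

/-- Partition entropy `H_μ(P) = Σ_{A∈P} -μ(A) log μ(A)`. -/
noncomputable def entP [MeasurableSpace X] (μ : Measure X) (P : Finset (Set X)) : ℝ≥0∞ :=
  ∑ A ∈ P, ENNReal.ofReal (-((μ A).toReal * Real.log ((μ A).toReal)))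

/-- The join `P^n = ∨_{j=0}^{n-1} T^{-j} P`. -/
noncomputable def joinN (T : X → X) (P : Finset (Set X)) (n : ℕ) : Finset (Set X) :=
  letI : DecidableEq (Set X) := Classical.decEq _
  (Fintype.piFinset (fun _ : Fin n => P)).image (fun f => ⋂ j : Fin n, T^[(j : ℕ)] ⁻¹' f j)

/-- `h_μ(T,P) = lim_n H_μ(P^n)/n` (the limit exists and equals the liminf). -/
noncomputable def entRate [MeasurableSpace X] (T : X → X) (μ : Measure X)
    (P : Finset (Set X)) : ℝ≥0∞ :=
  Filter.liminf (fun n : ℕ => entP μ (joinN T P n) / (n : ℝ≥0∞)) Filter.atTop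

/-- `inf { h_μ(T,P) : P a finite Borel partition with diam P ≤ ε }`. -/
noncomputable def infEntRate [PseudoMetricSpace X] [MeasurableSpace X] (T : X → X)
    (μ : Measure X) (ε : ℝ) : ℝ≥0∞ :=
  ⨅ (P : Finset (Set X)) (_ : IsFinPartition P) (_ : ∀ s ∈ P, Metric.diam s ≤ ε),
    entRate T μ P

/-- Kolmogorov–Sinai entropy `h_μ(T)`. -/
noncomputable def ksEntropy [MeasurableSpace X] (T : X → X) (μ : Measure X) : ℝ≥0∞ :=
  ⨆ (P : Finset (Set X)) (_ : IsFinPartition P), entRate T μ P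

/-- A finite open cover. -/
def IsFinOpenCover [TopologicalSpace X] (α : Finset (Set X)) : Prop :=
  (∀ A ∈ α, IsOpen A) ∧ ⋃₀ (α : Set (Set X)) = Set.univ

/-- `ord(β) = max_x #{B ∈ β : x ∈ B} - 1`. -/
noncomputable def ordCover (β : Finset (Set X)) : ℕ :=
  sSup {k | ∃ x : X, Nat.card {B : Set X // B ∈ β ∧ x ∈ B} = k} - 1

/-- `D(α) = min_{β ≻ α} ord(β)`, over finite open covers `β` refining `α`. -/
noncomputable def Dcover [TopologicalSpace X] (α : Finset (Set X)) : ℕ :=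
  sInf {k | ∃ β : Finset (Set X), IsFinOpenCover β ∧ (∀ B ∈ β, ∃ A ∈ α, B ⊆ A) ∧
    ordCover β = k}

/-- Mean (topological) dimension `mdim(X,T) = sup_α lim_n D(α^n)/n`. -/
noncomputable def mdimTop [TopologicalSpace X] (T : X → X) : ℝ≥0∞ :=
  ⨆ (α : Finset (Set X)) (_ : IsFinOpenCover α),
    Filter.liminf (fun n : ℕ => (Dcover (joinN T α n) : ℝ≥0∞) / (n : ℝ≥0∞)) Filter.atTop

/-- The marker property for a homeomorphism. -/
def MarkerProperty [TopologicalSpace X] (T : X ≃ₜ X) : Prop :=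
  ∀ N : ℕ, 0 < N → ∃ U : Set X, IsOpen U ∧
    (∀ n : ℕ, 1 ≤ n → n ≤ N → U ∩ (⇑T)^[n] '' U = ∅) ∧
    ⋃ n : ℤ, ⇑(T.toEquiv ^ n) '' U = Set.univ

/-- Upper dimension `limsup_{ε→0} F(μ,ε)/log(1/ε)` associated with a candidate `F`. -/
noncomputable def dimFUpper [MeasurableSpace X] (F : Measure X → ℝ → ℝ≥0∞)
    (μ : Measure X) : ℝ≥0∞ :=
  Filter.limsup (fun ε : ℝ => F μ ε / ENNReal.ofReal (Real.log (1 / ε)))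
    (nhdsWithin 0 (Set.Ioi 0))

/-- Lower dimension `liminf_{ε→0} F(μ,ε)/log(1/ε)` associated with a candidate `F`. -/
noncomputable def dimFLower [MeasurableSpace X] (F : Measure X → ℝ → ℝ≥0∞)
    (μ : Measure X) : ℝ≥0∞ :=
  Filter.liminf (fun ε : ℝ => F μ ε / ENNReal.ofReal (Real.log (1 / ε)))
    (nhdsWithin 0 (Set.Ioi 0))

/-- A candidate function: for each invariant probability measure `μ`, `F(μ,·)` is
non-decreasing as `ε` decreases, and `F(μ,ε) → h_μ(T)` as `ε → 0⁺`. -/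
def IsCandidate [MeasurableSpace X] (T : X → X) (F : Measure X → ℝ → ℝ≥0∞) : Prop :=
  ∀ μ : Measure X, IsProbabilityMeasure μ → MeasurePreserving T μ μ →
    (∀ ε₁ ε₂ : ℝ, 0 < ε₁ → ε₁ ≤ ε₂ → F μ ε₂ ≤ F μ ε₁) ∧
    Filter.Tendsto (F μ) (nhdsWithin 0 (Set.Ioi 0)) (nhds (ksEntropy T μ))

end MMD

open MMD

/-!
Let `ξ`, `η` nearly attain the rate at block length `n`, draw a word `u` from the law `P` of `η`,
and weigh a point `z` by `W z = ∑ u, P u * ∏ l, ψ (d (T^l z) (u l))`, where `ψ` equals `1` at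
small distances and a small constant `b` at distances at least `δ / 2`. By Gibbs' inequality
(Donsker–Varadhan) `∫ log W dμ ≥ 𝔼 log ∏ l, ψ (d (T^l ξ) (η l)) - I(ξ; η)`, and the expectation is
at least `s * n * log b` for distortion `s`.

Let `E` be an `(N, δ)`-separated set of points along whose orbits the mean of `log W` is close to
its `μ`-integral. Cut `[0, N)` into blocks of length `n`; some phase of the cut makes the product of
`W` over the block starts at least `exp (N / n * ∫ log W dμ)`. Conversely, for a fixed phase and
fixed words on the blocks, the products of penalties sum over `E` to at most `(1 + M * b) ^ N`, up
to a constant, where `M` is the number of cells in a partition of mesh below `δ`: two points with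
errors at the same positions, and in the same cells there, are not separated. Comparing the two
bounds, `PS ≤ I(ξ; η) / n + M * b - s * log b`; let `s → 0` and then `b → 0`.
-/

namespace MMD

section FiniteInformation

variable {Ω A B ι κ : Type*} [MeasurableSpace Ω] [MeasurableSpace A] [MeasurableSpace B]
  [Fintype ι] [MeasurableSpace ι] [MeasurableSingletonClass ι]
  [Fintype κ] [MeasurableSpace κ] [MeasurableSingletonClass κ]

lemma sum_mul_log_sub_log_le {α : Type*} (s : Finset α) {p q : α → ℝ} (hp : ∀ i ∈ s, 0 ≤ p i)
    (hq : ∀ i ∈ s, 0 ≤ q i) (hpq : ∀ i ∈ s, p i ≠ 0 → q i ≠ 0) :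
    ∑ i ∈ s, p i * (Real.log (q i) - Real.log (p i)) ≤ ∑ i ∈ s, q i - ∑ i ∈ s, p i := by
  rw [← Finset.sum_sub_distrib]
  refine Finset.sum_le_sum fun i hi => ?_
  rcases (hp i hi).eq_or_lt with hpi | hpi
  · simpa [← hpi] using hq i hi
  · have hqi : 0 < q i := (hq i hi).lt_of_ne' (hpq i hi hpi.ne')
    calc p i * (Real.log (q i) - Real.log (p i)) = p i * Real.log (q i / p i) := by
          rw [Real.log_div hqi.ne' hpi.ne']
      _ ≤ p i * (q i / p i - 1) := by
          gcongr
          exact Real.log_le_sub_one_of_pos (div_pos hqi hpi)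
      _ = q i - p i := by field_simp

lemma mul_log_mul_div_sub_log {p x y e z : ℝ} (hx : p ≠ 0 → x ≠ 0) (hy : p ≠ 0 → y ≠ 0)
    (he : e ≠ 0) (hz : z ≠ 0) :
    p * (Real.log (x * (y * e / z)) - Real.log p) =
      p * Real.log e - p * Real.log (p / (x * y)) - p * Real.log z := by
  rcases eq_or_ne p 0 with rfl | hp
  · simp
  replace hx := hx hp
  replace hy := hy hp
  rw [Real.log_mul hx (by positivity), Real.log_div (by positivity) hz, Real.log_mul hy he,
    Real.log_div hp (by positivity), Real.log_mul hx hy]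
  ring

/-- The mutual information of two random variables with values in finite types, in nats. It is the
value of the sums in `mutualInfo` at the partitions into fibres. -/
def finMutualInfo {Ω ι κ : Type*} [MeasurableSpace Ω] [Fintype ι] [Fintype κ] (P : Measure Ω)
    (X : Ω → ι) (Y : Ω → κ) : ℝ :=
  ∑ i, ∑ j, P.real (X ⁻¹' {i} ∩ Y ⁻¹' {j}) *
    Real.log (P.real (X ⁻¹' {i} ∩ Y ⁻¹' {j}) / (P.real (X ⁻¹' {i}) * P.real (Y ⁻¹' {j})))

open Classical in
lemma isFinPartition_image_fiber {g : A → ι} (hg : Measurable g) :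
    IsFinPartition (Finset.univ.image fun i => g ⁻¹' {i}) := by
  refine ⟨?_, ?_, ?_⟩
  · simp only [Finset.mem_image, Finset.mem_univ, true_and, forall_exists_index,
      forall_apply_eq_imp_iff]
    exact fun i => hg (measurableSet_singleton i)
  · simp only [Finset.mem_image, Finset.mem_univ, true_and, forall_exists_index,
      forall_apply_eq_imp_iff]
    exact fun i j hij => pairwise_disjoint_fiber g fun h => hij (by rw [h])
  · exact Set.eq_univ_of_forall fun x => Set.mem_sUnion.2 ⟨g ⁻¹' {g x}, by simp, rfl⟩

open Classical in
lemma sum_image_fiber {α β M : Type*} [Fintype β] [AddCommMonoid M] (g : α → β) {F : Set α → M}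
    (hF : F ∅ = 0) :
    ∑ s ∈ Finset.univ.image (fun i => g ⁻¹' {i}), F s = ∑ i, F (g ⁻¹' {i}) :=
  Finset.sum_image_of_disjoint hF fun _ _ _ _ h => pairwise_disjoint_fiber g h

lemma ofReal_finMutualInfo_comp_le_mutualInfo (P : Measure Ω) (ξ : Ω → A) (η : Ω → B)
    {g : A → ι} (hg : Measurable g) {h : B → κ} (hh : Measurable h) :
    ENNReal.ofReal (finMutualInfo P (g ∘ ξ) (h ∘ η)) ≤ mutualInfo P ξ η := by
  classical
  refine le_iSup₂_of_le _ (isFinPartition_image_fiber hg)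
    (le_iSup₂_of_le _ (isFinPartition_image_fiber hh) (ENNReal.ofReal_le_ofReal ?_))
  rw [sum_image_fiber g (by simp)]
  refine Finset.sum_le_sum fun i _ => ?_
  rw [sum_image_fiber h (by simp)]
  rfl

variable {P : Measure Ω}

lemma integral_comp_eq_sum [IsFiniteMeasure P] {V : Ω → ι} (hV : Measurable V) (F : ι → ℝ) :
    ∫ ω, F (V ω) ∂P = ∑ i, P.real (V ⁻¹' {i}) * F i := by
  rw [← integral_map hV.aemeasurable (measurable_of_finite F).aestronglyMeasurable,
    integral_fintype Integrable.of_finite]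
  simp only [map_measureReal_apply hV (measurableSet_singleton _), smul_eq_mul]

lemma integral_comp_eq_sum_sum [IsFiniteMeasure P] {X : Ω → ι} (hX : Measurable X) {Y : Ω → κ}
    (hY : Measurable Y) (F : ι → κ → ℝ) :
    ∫ ω, F (X ω) (Y ω) ∂P = ∑ i, ∑ j, P.real (X ⁻¹' {i} ∩ Y ⁻¹' {j}) * F i j := by
  rw [integral_comp_eq_sum (hX.prodMk hY) fun q : ι × κ => F q.1 q.2, Fintype.sum_prod_type]
  simp only [← Set.singleton_prod_singleton, Set.mk_preimage_prod]

lemma sum_measureReal_fiber [IsProbabilityMeasure P] {V : Ω → ι} (hV : Measurable V) :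
    ∑ i, P.real (V ⁻¹' {i}) = 1 := by
  simpa using (integral_comp_eq_sum (P := P) hV fun _ => 1).symm

lemma exists_measureReal_fiber_pos {Ω ι : Type*} [MeasurableSpace Ω] [Countable ι] (P : Measure Ω)
    [IsProbabilityMeasure P] (V : Ω → ι) : ∃ i, 0 < P.real (V ⁻¹' {i}) := by
  obtain ⟨i, hi⟩ := exists_measure_pos_of_not_measure_iUnion_null (μ := P)
    (s := fun i => V ⁻¹' {i}) (by simp [← Set.preimage_iUnion, Set.iUnion_of_singleton])
  exact ⟨i, ENNReal.toReal_pos hi.ne' (measure_ne_top P _)⟩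

-- Gibbs' inequality for the law of `(X, Y)` against the product law, tilted by `e` and normalised
-- for each value of `X`: the lower half of the Donsker–Varadhan formula.
lemma integral_log_sub_finMutualInfo_le [IsProbabilityMeasure P] {X : Ω → ι} (hX : Measurable X)
    {Y : Ω → κ} (hY : Measurable Y) {e : ι → κ → ℝ} (he : ∀ i j, 0 < e i j) :
    ∫ ω, Real.log (e (X ω) (Y ω)) ∂P - finMutualInfo P X Y ≤
      ∫ ω, Real.log (∑ j, P.real (Y ⁻¹' {j}) * e (X ω) j) ∂P := by
  set p : ι × κ → ℝ := fun c => P.real (X ⁻¹' {c.1} ∩ Y ⁻¹' {c.2})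
  set Z : ι → ℝ := fun i => ∑ j, P.real (Y ⁻¹' {j}) * e i j
  set q : ι × κ → ℝ := fun c => P.real (X ⁻¹' {c.1}) * (P.real (Y ⁻¹' {c.2}) * e c.1 c.2 / Z c.1)
  have hZ i : 0 < Z i := by
    obtain ⟨j, hj⟩ := exists_measureReal_fiber_pos P Y
    exact Finset.sum_pos' (fun j _ => mul_nonneg measureReal_nonneg (he i j).le)
      ⟨j, Finset.mem_univ j, mul_pos hj (he i j)⟩
  have hXp c (hc : p c ≠ 0) : P.real (X ⁻¹' {c.1}) ≠ 0 := fun h =>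
    hc (measureReal_mono_null Set.inter_subset_left h)
  have hYp c (hc : p c ≠ 0) : P.real (Y ⁻¹' {c.2}) ≠ 0 := fun h =>
    hc (measureReal_mono_null Set.inter_subset_right h)
  have hp_sum : ∑ c, p c = 1 := by
    simpa [Fintype.sum_prod_type, p] using
      (integral_comp_eq_sum_sum (P := P) hX hY fun _ _ => 1).symm
  have hq_sum : ∑ c, q c = 1 := by
    simp only [Fintype.sum_prod_type, q, ← Finset.mul_sum, ← Finset.sum_div]
    simpa [Z, div_self (hZ _).ne'] using sum_measureReal_fiber (P := P) hX
  have hgibbs := sum_mul_log_sub_log_le Finset.univ (p := p) (q := q)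
    (fun _ _ => measureReal_nonneg)
    (fun c _ => mul_nonneg measureReal_nonneg
      (div_nonneg (mul_nonneg measureReal_nonneg (he _ _).le) (hZ _).le))
    (fun c _ hc => mul_ne_zero (hXp c hc)
      (div_ne_zero (mul_ne_zero (hYp c hc) (he _ _).ne') (hZ _).ne'))
  rw [hp_sum, hq_sum, sub_self] at hgibbs
  simp only [q, mul_log_mul_div_sub_log (hXp _) (hYp _) (he _ _).ne' (hZ _).ne',
    Finset.sum_sub_distrib, Fintype.sum_prod_type] at hgibbs
  rw [integral_comp_eq_sum_sum hX hY fun i j => Real.log (e i j),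
    integral_comp_eq_sum_sum hX hY fun i _ => Real.log (Z i), finMutualInfo]
  linarith

end FiniteInformation
section CodeWeight

variable {X U : Type*} [Fintype U] {n : ℕ} {T : X → X} {P : U → ℝ} {c : U → Fin n → X}
  {ψ : ℝ → ℝ} {b ε δ : ℝ}

/-- The threshold function equal to `b` at distances at least `ε` and to `1` at smaller ones: the
factor by which a single error of a code is penalised. -/
def penalty (b ε t : ℝ) : ℝ := if ε ≤ t then b else 1

/-- The partition function of a random code with code words `c u` of probability `P u`: the mean,
over the code word, of the product of the penalties `ψ (d (T^l z) (c u l))`. -/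
def codeWeight [PseudoMetricSpace X] (T : X → X) (P : U → ℝ) (c : U → Fin n → X) (ψ : ℝ → ℝ)
    (z : X) : ℝ :=
  ∑ u, P u * ∏ l : Fin n, ψ (dist (T^[(l : ℕ)] z) (c u l))

lemma penalty_mem_Icc (hb : b ≤ 1) (t : ℝ) : penalty b ε t ∈ Icc b 1 := by
  unfold penalty
  split_ifs <;> simp [hb]

lemma measurable_penalty : Measurable (penalty b ε) :=
  Measurable.ite measurableSet_Ici measurable_const measurable_const

lemma exists_continuous_penalty_le_le_penalty (hεδ : ε < δ) (hb₀ : 0 ≤ b) (hb₁ : b ≤ 1) :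
    ∃ ψ : ℝ → ℝ, Continuous ψ ∧ penalty b ε ≤ ψ ∧ ψ ≤ penalty b δ := by
  have hpos : 0 < δ - ε := sub_pos.2 hεδ
  refine ⟨fun t => max b (min 1 ((δ - t) / (δ - ε))), by fun_prop, fun t => ?_, fun t => ?_⟩ <;>
    unfold penalty <;> split_ifs with h
  · exact le_max_left _ _
  · exact le_max_of_le_right (le_min le_rfl ((one_le_div hpos).2 (by linarith)))
  · exact max_le le_rfl
      ((min_le_right _ _).trans ((div_nonpos_of_nonpos_of_nonneg (by linarith) hpos.le).trans hb₀))
  · exact max_le hb₁ (min_le_left _ _)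

lemma log_prod_penalty (b ε : ℝ) (t : Fin n → ℝ) :
    Real.log (∏ l, penalty b ε (t l)) = Nat.card {l // ε ≤ t l} * Real.log b := by
  simp only [penalty, Finset.prod_ite, Finset.prod_const, one_pow, mul_one, Real.log_pow,
    Nat.card_eq_fintype_card, Fintype.card_subtype]

variable [PseudoMetricSpace X]

lemma codeWeight_le_codeWeight {ψ' : ℝ → ℝ} (hP : ∀ u, 0 ≤ P u) (hψ : 0 ≤ ψ) (hψψ' : ψ ≤ ψ')
    (z : X) : codeWeight T P c ψ z ≤ codeWeight T P c ψ' z :=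
  Finset.sum_le_sum fun u _ => mul_le_mul_of_nonneg_left
    (Finset.prod_le_prod (fun _ _ => hψ _) fun _ _ => hψψ' _) (hP u)

lemma codeWeight_mem_Icc (hP : P ∈ stdSimplex ℝ U) (hb : 0 ≤ b) (hψ : ∀ t, ψ t ∈ Icc b 1) (z : X) :
    codeWeight T P c ψ z ∈ Icc (b ^ n) 1 := by
  have hprod u : ∏ l : Fin n, ψ (dist (T^[(l : ℕ)] z) (c u l)) ∈ Icc (b ^ n) 1 := by
    refine ⟨?_, Finset.prod_le_one (fun _ _ => hb.trans (hψ _).1) fun _ _ => (hψ _).2⟩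
    simpa using Finset.prod_le_prod (s := Finset.univ) (fun (_ : Fin n) _ => hb)
      fun l _ => (hψ (dist (T^[(l : ℕ)] z) (c u l))).1
  simpa [codeWeight] using
    (convex_Icc (b ^ n) (1 : ℝ)).sum_mem (fun u _ => hP.1 u) hP.2 fun u _ => hprod u

lemma codeWeight_pos (hP : P ∈ stdSimplex ℝ U) (hb : 0 < b) (hψ : ∀ t, ψ t ∈ Icc b 1) (z : X) :
    0 < codeWeight T P c ψ z :=
  (pow_pos hb n).trans_le (codeWeight_mem_Icc hP hb.le hψ z).1

lemma norm_log_codeWeight_le (hP : P ∈ stdSimplex ℝ U) (hb : 0 < b) (hψ : ∀ t, ψ t ∈ Icc b 1)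
    (z : X) : ‖Real.log (codeWeight T P c ψ z)‖ ≤ -Real.log (b ^ n) := by
  obtain ⟨hlow, hup⟩ := codeWeight_mem_Icc (T := T) (c := c) hP hb.le hψ z
  have hpos := codeWeight_pos (T := T) (c := c) hP hb hψ z
  rw [Real.norm_eq_abs, abs_of_nonpos (Real.log_nonpos hpos.le hup)]
  exact neg_le_neg (Real.log_le_log (pow_pos hb n) hlow)

lemma continuous_codeWeight (hT : Continuous T) (hψ : Continuous ψ) :
    Continuous (codeWeight T P c ψ) :=
  continuous_finsetSum _ fun _ _ => continuous_const.mul <| continuous_finsetProd _ fun _ _ =>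
    hψ.comp ((hT.iterate _).dist continuous_const)

variable [MeasurableSpace X] [OpensMeasurableSpace X]

lemma measurable_codeWeight (hT : Measurable T) (hψ : Measurable ψ) :
    Measurable (codeWeight T P c ψ) :=
  Finset.measurable_fun_sum _ fun _ _ => measurable_const.mul <| Finset.measurable_fun_prod _
    fun _ _ => hψ.comp <|
      (continuous_id.dist continuous_const).measurable.comp (hT.iterate _)

lemma integrable_log_codeWeight (μ : Measure X) [IsFiniteMeasure μ] (hT : Measurable T)
    (hψ : Measurable ψ) (hP : P ∈ stdSimplex ℝ U) (hb : 0 < b) (hψb : ∀ t, ψ t ∈ Icc b 1) :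
    Integrable (fun z => Real.log (codeWeight T P c ψ z)) μ :=
  .of_bound (measurable_codeWeight hT hψ).log.aestronglyMeasurable _
    (ae_of_all _ (norm_log_codeWeight_le hP hb hψb))

end CodeWeight

section Counting

lemma sum_prod_sum_le_of_forall {α ι U : Type*} [Fintype ι] [Fintype U] {P : U → ℝ}
    (hP : P ∈ stdSimplex ℝ U) (e : ι → U → α → ℝ) (E : Finset α) {C : ℝ}
    (h : ∀ v : ι → U, ∑ x ∈ E, ∏ k, e k (v k) x ≤ C) :
    ∑ x ∈ E, ∏ k, ∑ u, P u * e k u x ≤ C := by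
  classical
  have hP_prod : ∑ v : ι → U, ∏ k, P (v k) = 1 := by
    simpa [hP.2] using (Finset.prod_univ_sum (fun _ : ι => Finset.univ) fun _ u => P u).symm
  calc ∑ x ∈ E, ∏ k, ∑ u, P u * e k u x
      = ∑ v : ι → U, (∏ k, P (v k)) * ∑ x ∈ E, ∏ k, e k (v k) x := by
        simp only [Finset.prod_univ_sum, Fintype.piFinset_univ, Finset.prod_mul_distrib,
          Finset.mul_sum]
        exact Finset.sum_comm
    _ ≤ ∑ v : ι → U, (∏ k, P (v k)) * C :=
        Finset.sum_le_sum fun v _ =>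
          mul_le_mul_of_nonneg_left (h v) (Finset.prod_nonneg fun k _ => hP.1 _)
    _ = C := by rw [← Finset.sum_mul, hP_prod, one_mul]

lemma exists_coloring_dist_lt {X : Type*} [PseudoMetricSpace X]
    (hX : TotallyBounded (univ : Set X)) {δ : ℝ} (hδ : 0 < δ) :
    ∃ (M : ℕ) (color : X → Fin M), ∀ x y, color x = color y → dist x y < δ := by
  obtain ⟨t, ht, hcover⟩ := Metric.totallyBounded_iff.1 hX (δ / 2) (half_pos hδ)
  have hcenter x : ∃ y : t, dist x (y : X) < δ / 2 := by
    simpa using hcover (mem_univ x)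
  choose center hdist using hcenter
  have : Finite t := ht
  refine ⟨Nat.card t, fun x => Finite.equivFin t (center x), fun x y hxy => ?_⟩
  have hcenters : center x = center y := (Finite.equivFin t).injective hxy
  have hx := hdist x
  rw [hcenters] at hx
  linarith [hdist y, dist_triangle_right x y (center y)]

lemma sum_prod_apply_le_prod_sum {α Q A : Type*} [Fintype Q] [Fintype A] {E : Finset α}
    {label : α → Q → A} (hlabel : Set.InjOn label E) {w : Q → A → ℝ} (hw : ∀ q a, 0 ≤ w q a) :
    ∑ x ∈ E, ∏ q, w q (label x q) ≤ ∏ q, ∑ a, w q a := by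
  classical
  calc ∑ x ∈ E, ∏ q, w q (label x q)
      = ∑ l ∈ E.image label, ∏ q, w q (l q) :=
        (Finset.sum_image (f := fun l : Q → A => ∏ q, w q (l q)) hlabel).symm
    _ ≤ ∑ l : Q → A, ∏ q, w q (l q) :=
        Finset.sum_le_sum_of_subset_of_nonneg (Finset.subset_univ _)
          fun l _ _ => Finset.prod_nonneg fun q _ => hw q _
    _ = ∏ q, ∑ a, w q a := by rw [Finset.prod_univ_sum, Fintype.piFinset_univ]

-- A point is recovered from the colours of those observations that miss their centre: two
-- observations within `δ / 2` of the same centre are closer than `δ`.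
lemma sum_prod_penalty_le_prod {α X Q ι : Type*} [PseudoMetricSpace X] [Fintype Q] [Fintype ι]
    {δ : ℝ} {color : X → ι} (hcolor : ∀ x y, color x = color y → dist x y < δ)
    {E : Finset α} {o : Q → α → X}
    (hE : (E : Set α).Pairwise fun x y => ∃ q, δ ≤ dist (o q x) (o q y))
    (p : Q → X) {b : Q → ℝ} (hb : ∀ q, 0 ≤ b q) :
    ∑ x ∈ E, ∏ q, penalty (b q) (δ / 2) (dist (o q x) (p q)) ≤
      ∏ q, (1 + Fintype.card ι * b q) := by
  classical
  let label (x : α) (q : Q) : Option ι :=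
    if δ / 2 ≤ dist (o q x) (p q) then some (color (o q x)) else none
  have hinj : Set.InjOn label E := by
    intro x hx y hy hxy
    by_contra hne
    obtain ⟨q, hq⟩ := hE hx hy hne
    have hlabel := congrFun hxy q
    simp only [label] at hlabel
    split_ifs at hlabel with hx' hy' hy'
    · exact hq.not_gt (hcolor _ _ (Option.some.inj hlabel))
    · linarith [dist_triangle_right (o q x) (o q y) (p q)]
  have hpenalty x q : penalty (b q) (δ / 2) (dist (o q x) (p q)) =
      (label x q).elim 1 fun _ => b q := by
    simp only [penalty, label]
    split_ifs <;> rfl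
  simp only [hpenalty]
  refine (sum_prod_apply_le_prod_sum hinj (w := fun q a => a.elim 1 fun _ => b q) ?_).trans_eq ?_
  · rintro q (_ | _)
    exacts [zero_le_one, hb q]
  · simp [Fintype.sum_option]

lemma card_filter_range_mod_mul_le {n r : ℕ} (hr : r < n) (N : ℕ) :
    {k ∈ Finset.range N | k % n = r}.card * n ≤ N + n := by
  have hcard : {k ∈ Finset.range N | k % n = r}.card ≤ N / n + 1 := by
    have hcount := Nat.count_modEq_card N (r.zero_le.trans_lt hr) r
    simp only [Nat.count_eq_card_filter_range, Nat.ModEq, Nat.mod_eq_of_lt hr] at hcount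
    rw [hcount]
    split_ifs <;> omega
  calc _ ≤ (N / n + 1) * n := Nat.mul_le_mul_right n hcard
    _ = N / n * n + n := by ring
    _ ≤ N + n := Nat.add_le_add_right (Nat.div_mul_le_self N n) n

lemma exists_mod_eq_add_of_le {n r i : ℕ} (hr : r < n) (hi : n ≤ i) :
    ∃ k ≤ i, k % n = r ∧ ∃ l < n, l + k = i := by
  have hdiv := Nat.div_add_mod (i - r) n
  refine ⟨r + n * ((i - r) / n), by omega, ?_, (i - r) % n, Nat.mod_lt _ (by omega), by omega⟩
  rw [Nat.add_mul_mod_self_left, Nat.mod_eq_of_lt hr]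

lemma exists_le_dist_of_le_bowenDist {X : Type*} [PseudoMetricSpace X] {T : X → X} {N : ℕ}
    {δ : ℝ} (hδ : 0 < δ) {x y : X} (h : δ ≤ bowenDist T N x y) :
    ∃ i < N, δ ≤ dist (T^[i] x) (T^[i] y) := by
  by_contra! hlt
  rcases isEmpty_or_nonempty (Fin N) with hN | hN
  · exact hδ.not_ge (by simpa [bowenDist] using h)
  · obtain ⟨i, hi⟩ := exists_eq_ciSup_of_finite (f := fun i : Fin N => dist (T^[i] x) (T^[i] y))
    exact (hlt i i.2).not_ge (h.trans_eq hi.symm)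

-- Jensen's inequality for `exp`, applied to the logarithms of the `n` subproducts.
lemma mul_exp_sum_log_div_le_sum_prod_mod {n : ℕ} (hn : 0 < n) (N : ℕ) {y : ℕ → ℝ}
    (hy : ∀ k, 0 < y k) :
    n * Real.exp ((∑ k ∈ Finset.range N, Real.log (y k)) / n) ≤
      ∑ r ∈ Finset.range n, ∏ k ∈ Finset.range N with k % n = r, y k := by
  have hn' : (0 : ℝ) < n := Nat.cast_pos.2 hn
  have hsplit : ∑ r ∈ Finset.range n, Real.log (∏ k ∈ Finset.range N with k % n = r, y k) =
      ∑ k ∈ Finset.range N, Real.log (y k) := by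
    simp only [Real.log_prod fun k _ => (hy k).ne']
    exact Finset.sum_fiberwise_of_maps_to (fun k _ => Finset.mem_range.2 (Nat.mod_lt k hn)) _
  have hjensen := convexOn_exp.map_sum_le (t := Finset.range n) (w := fun _ => (n : ℝ)⁻¹)
    (p := fun r => Real.log (∏ k ∈ Finset.range N with k % n = r, y k))
    (fun _ _ => by positivity) (by simp [hn'.ne']) fun _ _ => mem_univ _
  simp only [smul_eq_mul, ← Finset.mul_sum, hsplit,
    Real.exp_log (Finset.prod_pos fun k _ => hy k)] at hjensen
  rwa [div_eq_inv_mul, ← le_inv_mul_iff₀ hn']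

variable {X U ι : Type*} [PseudoMetricSpace X] [Fintype U] [Fintype ι] {n N : ℕ} {T : X → X}
  {P : U → ℝ} {c : U → Fin n → X} {ψ : ℝ → ℝ} {b δ : ℝ} {color : X → ι} {E : Finset X}

-- The `n` initial times need not lie in a block, so they enter with penalty `1`.
lemma sum_prod_prod_penalty_le (hδ : 0 < δ) (hb : 0 ≤ b)
    (hcolor : ∀ x y, color x = color y → dist x y < δ)
    (hE : (E : Set X).Pairwise fun x y => δ ≤ bowenDist T N x y) {r : ℕ} (hr : r < n)
    (p : ({k ∈ Finset.range N | k % n = r} : Finset ℕ) → Fin n → X) :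
    ∑ x ∈ E, ∏ k : ({k ∈ Finset.range N | k % n = r} : Finset ℕ), ∏ l : Fin n,
        penalty b (δ / 2) (dist (T^[(l : ℕ)] (T^[(k : ℕ)] x)) (p k l)) ≤
      (1 + Fintype.card ι : ℝ) ^ n * (1 + Fintype.card ι * b) ^ (N + n) := by
  rcases E.eq_empty_or_nonempty with rfl | ⟨x₀, -⟩
  · simpa using by positivity
  let K : Finset ℕ := {k ∈ Finset.range N | k % n = r}
  let o : (K × Fin n) ⊕ Fin n → X → X :=
    Sum.elim (fun q x => T^[(q.2 : ℕ)] (T^[(q.1 : ℕ)] x)) fun i x => T^[(i : ℕ)] x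
  have hobserve : (E : Set X).Pairwise fun x y => ∃ q, δ ≤ dist (o q x) (o q y) := by
    intro x hx y hy hxy
    obtain ⟨i, hiN, hi⟩ := exists_le_dist_of_le_bowenDist hδ (hE hx hy hxy)
    rcases lt_or_ge i n with hin | hin
    · exact ⟨.inr ⟨i, hin⟩, hi⟩
    · obtain ⟨k, hki, hk, l, hl, rfl⟩ := exists_mod_eq_add_of_le hr hin
      refine ⟨.inl (⟨k, by simp [K, hk]; omega⟩, ⟨l, hl⟩), ?_⟩
      simpa only [o, Sum.elim_inl, ← Function.iterate_add_apply] using hi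
  have hcount := sum_prod_penalty_le_prod hcolor hobserve
    (Sum.elim (fun q => p q.1 q.2) fun _ => x₀) (b := Sum.elim (fun _ => b) fun _ => 1)
    (by rintro (_ | _) <;> simp [hb])
  have hpenalty_one t : penalty 1 (δ / 2) t = 1 := ite_self _
  simp only [o, Fintype.prod_sum_type, Fintype.prod_prod_type, Sum.elim_inl, Sum.elim_inr,
    hpenalty_one, Finset.prod_const_one, Finset.prod_const, Finset.card_univ, Fintype.card_prod,
    Fintype.card_fin, Fintype.card_coe, mul_one] at hcount
  refine hcount.trans ?_
  rw [mul_comm]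
  gcongr
  · exact le_add_of_nonneg_right (by positivity)
  · exact card_filter_range_mod_mul_le hr N

lemma sum_prod_codeWeight_le (hP : P ∈ stdSimplex ℝ U) (hψ₀ : 0 ≤ ψ)
    (hψ : ψ ≤ penalty b (δ / 2)) (hδ : 0 < δ) (hb : 0 ≤ b)
    (hcolor : ∀ x y, color x = color y → dist x y < δ)
    (hE : (E : Set X).Pairwise fun x y => δ ≤ bowenDist T N x y) {r : ℕ} (hr : r < n) :
    ∑ x ∈ E, ∏ k ∈ Finset.range N with k % n = r, codeWeight T P c ψ (T^[k] x) ≤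
      (1 + Fintype.card ι : ℝ) ^ n * (1 + Fintype.card ι * b) ^ (N + n) := by
  simp only [codeWeight, ← Finset.prod_coe_sort {k ∈ Finset.range N | k % n = r}]
  refine sum_prod_sum_le_of_forall hP
    (fun (k : ({k ∈ Finset.range N | k % n = r} : Finset ℕ)) u x =>
      ∏ l : Fin n, ψ (dist (T^[(l : ℕ)] (T^[(k : ℕ)] x)) (c u l))) E fun v => ?_
  refine le_trans ?_ (sum_prod_prod_penalty_le hδ hb hcolor hE hr fun k => c (v k))
  gcongr with x _ k _ l _
  · exact fun k _ => Finset.prod_nonneg fun l _ => hψ₀ _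
  · exact fun l _ => hψ₀ _
  · exact hψ _

lemma card_le_of_le_sum_log_codeWeight (hn : 0 < n) (hP : P ∈ stdSimplex ℝ U) (hb : 0 < b)
    (hψb : ∀ t, ψ t ∈ Icc b 1) (hψ : ψ ≤ penalty b (δ / 2)) (hδ : 0 < δ)
    (hcolor : ∀ x y, color x = color y → dist x y < δ)
    (hE : (E : Set X).Pairwise fun x y => δ ≤ bowenDist T N x y) {a : ℝ}
    (ha : ∀ x ∈ E, N * a ≤ ∑ k ∈ Finset.range N, Real.log (codeWeight T P c ψ (T^[k] x))) :
    (E.card : ℝ) ≤ (1 + Fintype.card ι : ℝ) ^ n * Real.exp (n * (Fintype.card ι * b)) *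
      Real.exp (N * (Fintype.card ι * b - a / n)) := by
  set M := (Fintype.card ι : ℝ)
  have hn' : (0 : ℝ) < n := Nat.cast_pos.2 hn
  have hψ₀ : 0 ≤ ψ := fun t => hb.le.trans (hψb t).1
  have hpoint x (hx : x ∈ E) : n * Real.exp (N * a / n) ≤ ∑ r ∈ Finset.range n,
      ∏ k ∈ Finset.range N with k % n = r, codeWeight T P c ψ (T^[k] x) := by
    refine le_trans ?_ (mul_exp_sum_log_div_le_sum_prod_mod hn N
      fun k => codeWeight_pos hP hb hψb (T^[k] x))
    gcongr
    exact ha x hx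
  have hcard : E.card * Real.exp (N * a / n) ≤ (1 + M) ^ n * (1 + M * b) ^ (N + n) := by
    refine le_of_mul_le_mul_left ?_ hn'
    calc n * (E.card * Real.exp (N * a / n)) = ∑ _ ∈ E, n * Real.exp (N * a / n) := by
          rw [Finset.sum_const, nsmul_eq_mul, mul_left_comm]
      _ ≤ ∑ r ∈ Finset.range n, ∑ x ∈ E,
            ∏ k ∈ Finset.range N with k % n = r, codeWeight T P c ψ (T^[k] x) :=
          (Finset.sum_le_sum hpoint).trans_eq Finset.sum_comm
      _ ≤ ∑ r ∈ Finset.range n, (1 + M) ^ n * (1 + M * b) ^ (N + n) :=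
          Finset.sum_le_sum fun r hr =>
            sum_prod_codeWeight_le hP hψ₀ hψ hδ hb.le hcolor hE (Finset.mem_range.1 hr)
      _ = n * ((1 + M) ^ n * (1 + M * b) ^ (N + n)) := by simp
  calc (E.card : ℝ) ≤ (1 + M) ^ n * (1 + M * b) ^ (N + n) / Real.exp (N * a / n) :=
        (le_div_iff₀ (Real.exp_pos _)).2 hcard
    _ ≤ (1 + M) ^ n * Real.exp (M * b) ^ (N + n) / Real.exp (N * a / n) := by
        gcongr
        linarith [Real.add_one_le_exp (M * b)]
    _ = (1 + M) ^ n * Real.exp (n * (M * b)) * Real.exp (N * (M * b - a / n)) := by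
        rw [← Real.exp_nat_mul, mul_div_assoc, ← Real.exp_sub, mul_assoc, ← Real.exp_add]
        push_cast
        ring_nf

end Counting

section PfisterSullivan

lemma integral_empMeas {X : Type*} [MeasurableSpace X] [MeasurableSingletonClass X] (T : X → X)
    (N : ℕ) (x : X) (f : X → ℝ) :
    ∫ y, f y ∂empMeas T N x = (N : ℝ)⁻¹ * ∑ k ∈ Finset.range N, f (T^[k] x) := by
  rw [empMeas, integral_smul_measure,
    integral_finsetSum_measure fun _ _ => integrable_dirac (by simp)]
  simp

lemma sepNum_le_of_forall_card_le {X : Type*} [PseudoMetricSpace X] {T : X → X} {n : ℕ} {δ : ℝ}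
    {Z : Set X} {B : ℝ}
    (h : ∀ E : Finset X, (E : Set X) ⊆ Z →
      (E : Set X).Pairwise (fun x y => δ ≤ bowenDist T n x y) → (E.card : ℝ) ≤ B) :
    (sepNum T n δ Z : ℝ) ≤ B := by
  have hB : 0 ≤ B := by simpa using h ∅ (by simp) (by simp)
  refine (Nat.le_floor_iff hB).1 (csSup_le' ?_)
  rintro k ⟨E, hEZ, rfl, hE⟩
  exact Nat.le_floor (h E hEZ hE)

lemma limsup_ofReal_log_div_le {s : ℕ → ℕ} {C R : ℝ}
    (h : ∀ N > 0, (s N : ℝ) ≤ C * Real.exp (N * R)) :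
    limsup (fun N => ENNReal.ofReal (Real.log (s N)) / (N : ℝ≥0∞)) atTop ≤ ENNReal.ofReal R := by
  have hlim : Tendsto (fun N : ℕ => ENNReal.ofReal (Real.log C / N + R)) atTop
      (𝓝 (ENNReal.ofReal R)) := by
    simpa using ENNReal.tendsto_ofReal
      ((tendsto_const_div_atTop_nhds_zero_nat (Real.log C)).add_const R)
  refine (limsup_le_limsup ?_).trans_eq hlim.limsup_eq
  filter_upwards [eventually_gt_atTop 0] with N hN
  rcases (s N).eq_zero_or_pos with hs | hs
  · simp [hs]
  have hN' : (0 : ℝ) < N := Nat.cast_pos.2 hN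
  have hs' : (0 : ℝ) < s N := Nat.cast_pos.2 hs
  have hC : 0 < C := pos_of_mul_pos_left (hs'.trans_le (h N hN)) (Real.exp_pos _).le
  have hlog : Real.log (s N) ≤ Real.log C + N * R := by
    simpa [Real.log_mul hC.ne' (Real.exp_pos _).ne'] using Real.log_le_log hs' (h N hN)
  calc ENNReal.ofReal (Real.log (s N)) / N = ENNReal.ofReal (Real.log (s N) / N) := by
        rw [ENNReal.ofReal_div_of_pos hN', ENNReal.ofReal_natCast]
    _ ≤ ENNReal.ofReal (Real.log C / N + R) := by
        refine ENNReal.ofReal_le_ofReal ((div_le_div_of_nonneg_right hlog hN'.le).trans_eq ?_)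
        field_simp

variable {X : Type*} [MetricSpace X] [MeasurableSpace X] [OpensMeasurableSpace X] {T : X → X}
  {μ : ProbabilityMeasure X} {δ : ℝ}

open scoped BoundedContinuousFunction in
lemma PSent_le_of_forall_card_le {f : X →ᵇ ℝ} {a : ℝ} (ha : a < ∫ x, f x ∂(μ : Measure X))
    {C R : ℝ}
    (h : ∀ N > 0, ∀ E : Finset X, (E : Set X).Pairwise (fun x y => δ ≤ bowenDist T N x y) →
      (∀ x ∈ E, N * a ≤ ∑ k ∈ Finset.range N, f (T^[k] x)) → (E.card : ℝ) ≤ C * Real.exp (N * R)) :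
    PSent T μ δ ≤ ENNReal.ofReal R := by
  have hopen : IsOpen {ρ : ProbabilityMeasure X | a < ∫ x, f x ∂(ρ : Measure X)} :=
    isOpen_lt continuous_const (ProbabilityMeasure.continuous_integral_boundedContinuousFunction f)
  refine iInf₂_le_of_le _ hopen (iInf_le_of_le ha
    (limsup_ofReal_log_div_le (C := C) fun N hN => ?_))
  refine sepNum_le_of_forall_card_le fun E hEF hE => h N hN E hE fun x hx => ?_
  obtain ⟨_, hxF⟩ := hEF hx
  have hN' : (0 : ℝ) < N := Nat.cast_pos.2 hN
  have hmean : a < (N : ℝ)⁻¹ * ∑ k ∈ Finset.range N, f (T^[k] x) := by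
    rw [← integral_empMeas]
    exact hxF
  rw [lt_inv_mul_iff₀ hN'] at hmean
  exact hmean.le

variable {U ι : Type*} [Fintype U] [Fintype ι] {n : ℕ} {P : U → ℝ} {c : U → Fin n → X}
  {ψ : ℝ → ℝ} {b : ℝ} {color : X → ι}

lemma PSent_le_ofReal_sub_integral_log_codeWeight (hT : Continuous T) (hn : 0 < n)
    (hP : P ∈ stdSimplex ℝ U) (hb : 0 < b) (hψc : Continuous ψ) (hψb : ∀ t, ψ t ∈ Icc b 1)
    (hψ : ψ ≤ penalty b (δ / 2)) (hδ : 0 < δ)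
    (hcolor : ∀ x y, color x = color y → dist x y < δ) :
    PSent T μ δ ≤ ENNReal.ofReal (Fintype.card ι * b -
      (∫ z, Real.log (codeWeight T P c ψ z) ∂(μ : Measure X)) / n) := by
  let f : BoundedContinuousFunction X ℝ := .ofNormedAddCommGroup
    (fun z => Real.log (codeWeight T P c ψ z))
    ((continuous_codeWeight hT hψc).log fun z => (codeWeight_pos hP hb hψb z).ne') _
    (norm_log_codeWeight_le hP hb hψb)
  set I := ∫ z, Real.log (codeWeight T P c ψ z) ∂(μ : Measure X)
  refine ENNReal.le_of_forall_pos_le_add fun τ hτ _ => ?_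
  have hI : I - n * τ < ∫ x, f x ∂(μ : Measure X) := sub_lt_self I (by positivity)
  calc PSent T μ δ ≤ ENNReal.ofReal (Fintype.card ι * b - (I - n * τ) / n) :=
        PSent_le_of_forall_card_le hI fun N _ E hE hsum =>
          card_le_of_le_sum_log_codeWeight hn hP hb hψb hψ hδ hcolor hE hsum
    _ = ENNReal.ofReal (Fintype.card ι * b - I / n + τ) := by
        congr 1
        field_simp
        ring
    _ ≤ ENNReal.ofReal (Fintype.card ι * b - I / n) + τ := by
        simpa using ENNReal.ofReal_add_le (p := Fintype.card ι * b - I / n) (q := τ)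

end PfisterSullivan

section RateDistortion

lemma mul_log_le_integral_log_prod_penalty {Ω : Type*} [MeasurableSpace Ω] {P : Measure Ω} {n : ℕ}
    {t : Ω → Fin n → ℝ} {b ε D : ℝ} (hb₀ : 0 < b) (hb₁ : b ≤ 1) (hD₀ : 0 ≤ D)
    (hD : ∫⁻ ω, (Nat.card {l // ε ≤ t ω l} : ℝ≥0∞) ∂P ≤ ENNReal.ofReal D) :
    D * Real.log b ≤ ∫ ω, Real.log (∏ l, penalty b ε (t ω l)) ∂P := by
  have hmean : ∫ ω, (Nat.card {l // ε ≤ t ω l} : ℝ) ∂P ≤ D :=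
    calc ∫ ω, (Nat.card {l // ε ≤ t ω l} : ℝ) ∂P
        ≤ (∫⁻ ω, (Nat.card {l // ε ≤ t ω l} : ℝ≥0∞) ∂P).toReal := by
          simpa using (le_abs_self _).trans (norm_integral_le_lintegral_norm
            (fun ω => (Nat.card {l // ε ≤ t ω l} : ℝ)) (μ := P))
      _ ≤ D := ENNReal.toReal_le_of_le_ofReal hD₀ hD
  simp only [log_prod_penalty, integral_mul_const]
  exact mul_le_mul_of_nonpos_right hmean (Real.log_nonpos hb₀.le hb₁)

variable {X Ω : Type*} [PseudoMetricSpace X] [MeasurableSpace X] [OpensMeasurableSpace X]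
  [MeasurableSpace Ω] {P : Measure Ω} [IsProbabilityMeasure P] {ξ : Ω → X} {n : ℕ} {T : X → X}
  {b ε : ℝ}

open Classical in
lemma integral_log_prod_penalty_sub_mutualInfo_le {B U : Type*} [MeasurableSpace B] [Fintype U]
    [MeasurableSpace U] [MeasurableSingletonClass U] {η : Ω → B} {κ : B → U}
    (hT : Measurable T) (hb : 0 < b) (hξ : Measurable ξ) (hη : Measurable η) (hκ : Measurable κ)
    (hI : mutualInfo P ξ η ≠ ⊤) (c : U → Fin n → X) :
    ∫ ω, Real.log (∏ l : Fin n, penalty b ε (dist (T^[(l : ℕ)] (ξ ω)) (c (κ (η ω)) l))) ∂P -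
        (mutualInfo P ξ η).toReal ≤
      ∫ ω, Real.log (codeWeight T (fun u => P.real (κ ∘ η ⁻¹' {u})) c (penalty b ε) (ξ ω)) ∂P := by
  let g (z : X) (q : U × Fin n) : Prop := ε ≤ dist (T^[(q.2 : ℕ)] z) (c q.1 q.2)
  let e (γ : U × Fin n → Prop) (u : U) : ℝ := ∏ l, if γ (u, l) then b else 1
  have hg : Measurable g := measurable_pi_lambda _ fun q => measurableSet_setOfPred.1 <|
    ((continuous_id.dist continuous_const).measurable.comp (hT.iterate q.2)) measurableSet_Ici
  have he γ u : 0 < e γ u := Finset.prod_pos fun l _ => by split_ifs <;> positivity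
  have hge z u : e (g z) u = ∏ l : Fin n, penalty b ε (dist (T^[(l : ℕ)] z) (c u l)) := by
    simp only [e, g, penalty]
  have hle := integral_log_sub_finMutualInfo_le (P := P) (hg.comp hξ) (hκ.comp hη) he
  have hinfo := (ENNReal.ofReal_le_iff_le_toReal hI).1
    (ofReal_finMutualInfo_comp_le_mutualInfo P ξ η hg hκ)
  simp only [Function.comp_apply, hge] at hle
  unfold codeWeight
  exact (sub_le_sub_left hinfo _).trans hle

lemma exists_le_integral_log_codeWeight [MeasurableSingletonClass X] {η : Ω → Fin n → X} {D : ℝ}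
    {S : Set X} [Fintype S] (hS : S.Nonempty) (hηS : ∀ᵐ ω ∂P, ∀ l, η ω l ∈ S)
    (hT : Measurable T) (hb₀ : 0 < b) (hb₁ : b ≤ 1) (hξ : Measurable ξ) (hη : Measurable η)
    (hI : mutualInfo P ξ η ≠ ⊤) (hD₀ : 0 ≤ D)
    (hD : ∫⁻ ω, (Nat.card {l : Fin n // ε ≤ dist (T^[(l : ℕ)] (ξ ω)) (η ω l)} : ℝ≥0∞) ∂P ≤
      ENNReal.ofReal D) :
    ∃ Q ∈ stdSimplex ℝ (Fin n → S), D * Real.log b - (mutualInfo P ξ η).toReal ≤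
      ∫ z, Real.log (codeWeight T Q (fun u l => (u l : X)) (penalty b ε) z) ∂P.map ξ := by
  obtain ⟨ρ, hρ, hρS⟩ := S.toFinite.measurableSet.exists_measurable_proj hS
  have hκ : Measurable fun (y : Fin n → X) l => ρ (y l) :=
    measurable_pi_lambda _ fun l => hρ.comp (measurable_pi_apply l)
  refine ⟨_, ⟨fun u => measureReal_nonneg, sum_measureReal_fiber (hκ.comp hη)⟩,
    le_trans (sub_le_sub_right ?_ _)
      ((integral_log_prod_penalty_sub_mutualInfo_le hT hb₀ hξ hη hκ hI _).trans_eq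
        (integral_map hξ.aemeasurable
          (measurable_codeWeight hT measurable_penalty).log.aestronglyMeasurable).symm)⟩
  refine (mul_log_le_integral_log_prod_penalty hb₀ hb₁ hD₀ hD).trans_eq (integral_congr_ae ?_)
  filter_upwards [hηS] with ω hω
  simp only [fun l => congrArg Subtype.val (hρS ⟨η ω l, hω l⟩)]

end RateDistortion

section UpperBound

variable {X : Type*} [MetricSpace X] [MeasurableSpace X] [BorelSpace X] {T : X → X}
  {μ : ProbabilityMeasure X} {ε δ : ℝ}

lemma PSent_le_RDistLInftyS_add {ι : Type*} [Fintype ι] {color : X → ι} {b s : ℝ}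
    (hT : Continuous T) (hε : 0 < ε) (hδ : 2 * ε < δ)
    (hcolor : ∀ x y, color x = color y → dist x y < δ) (hb₀ : 0 < b) (hb₁ : b ≤ 1) (hs : 0 < s) :
    PSent T μ δ ≤ RDistLInftyS T μ ε s +
      ENNReal.ofReal (Fintype.card ι * b - s * Real.log b) := by
  simp only [RDistLInftyS, ENNReal.iInf_add]
  refine le_iInf fun n => le_iInf fun hn => le_iInf fun ν => le_iInf fun hν => le_iInf fun hνμ =>
    le_iInf fun ⟨S, hS⟩ => le_iInf fun hD => ?_
  have hn' : (0 : ℝ) < n := Nat.cast_pos.2 hn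
  rcases eq_or_ne (mutualInfo ν Prod.fst Prod.snd) ⊤ with hI | hI
  · simp [hI, ENNReal.top_div_of_ne_top]
  have hηS : ∀ᵐ p ∂ν, ∀ l, p.2 l ∈ (S : Set X) := by
    have hSm : MeasurableSet (S : Set X) := S.measurableSet
    exact (ae_iff_prob_eq_one (by fun_prop)).2 hS
  have hS' : (S : Set X).Nonempty := by
    obtain ⟨p, hp⟩ := hηS.exists
    exact ⟨_, hp ⟨0, hn⟩⟩
  obtain ⟨Q, hQ, hle⟩ := exists_le_integral_log_codeWeight hS' hηS hT.measurable hb₀ hb₁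
    measurable_fst measurable_snd hI (by positivity) hD.le
  obtain ⟨ψ, hψc, hψε, hψδ⟩ := exists_continuous_penalty_le_le_penalty
    (show ε < δ / 2 by linarith) hb₀.le hb₁
  have hψb t : ψ t ∈ Icc b 1 :=
    ⟨(penalty_mem_Icc hb₁ t).1.trans (hψε t), (hψδ t).trans (penalty_mem_Icc hb₁ t).2⟩
  have hint : s * n * Real.log b - (mutualInfo ν Prod.fst Prod.snd).toReal ≤
      ∫ z, Real.log (codeWeight T Q (fun u l => (u l : X)) ψ z) ∂(μ : Measure X) := by
    rw [hνμ] at hle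
    refine hle.trans (integral_mono
      (integrable_log_codeWeight _ hT.measurable measurable_penalty hQ hb₀ (penalty_mem_Icc hb₁))
      (integrable_log_codeWeight _ hT.measurable hψc.measurable hQ hb₀ hψb) fun z => ?_)
    exact Real.log_le_log (codeWeight_pos hQ hb₀ (penalty_mem_Icc hb₁) z)
      (codeWeight_le_codeWeight hQ.1 (fun t => hb₀.le.trans (penalty_mem_Icc hb₁ t).1) hψε z)
  calc PSent T μ δ ≤ ENNReal.ofReal (Fintype.card ι * b -
        (∫ z, Real.log (codeWeight T Q (fun u l => (u l : X)) ψ z) ∂(μ : Measure X)) / n) :=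
        PSent_le_ofReal_sub_integral_log_codeWeight hT hn hQ hb₀ hψc hψb hψδ (by linarith) hcolor
    _ ≤ ENNReal.ofReal ((mutualInfo ν Prod.fst Prod.snd).toReal / n +
          (Fintype.card ι * b - s * Real.log b)) := by
        refine ENNReal.ofReal_le_ofReal ?_
        have := div_le_div_of_nonneg_right hint hn'.le
        rw [sub_div, mul_right_comm, mul_div_cancel_right₀ _ hn'.ne'] at this
        linarith
    _ ≤ ENNReal.ofReal ((mutualInfo ν Prod.fst Prod.snd).toReal / n) +
          ENNReal.ofReal (Fintype.card ι * b - s * Real.log b) := ENNReal.ofReal_add_le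
    _ = _ := by
        rw [ENNReal.ofReal_div_of_pos hn', ENNReal.ofReal_toReal hI, ENNReal.ofReal_natCast]

end UpperBound

end MMD

theorem stmt4_general {X : Type*} [MetricSpace X] [MeasurableSpace X] [BorelSpace X]
    (hX : TotallyBounded (univ : Set X)) {T : X → X} (hT : Continuous T) {ε δ : ℝ} (hε : 0 < ε)
    (hδ : 2 * ε < δ) (μ : ProbabilityMeasure X) : PSent T μ δ ≤ RDistLInfty T μ ε := by
  obtain ⟨M, color, hcolor⟩ := exists_coloring_dist_lt hX (by linarith : 0 < δ)
  refine ENNReal.le_of_forall_pos_le_add fun τ hτ _ => ?_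
  have hτ' : (0 : ℝ) < τ := hτ
  obtain ⟨b, hb₀, hb₁, hMb⟩ : ∃ b : ℝ, 0 < b ∧ b < 1 ∧ M * b ≤ τ / 2 := by
    refine ⟨min (1 / 2) (τ / (2 * (M + 1))), by positivity, min_lt_of_left_lt (by norm_num), ?_⟩
    calc M * min (1 / 2) (τ / (2 * (M + 1))) ≤ (M + 1) * (τ / (2 * (M + 1))) := by
          gcongr
          · linarith
          · exact min_le_right _ _
      _ = τ / 2 := by field_simp
  have hlog : Real.log b < 0 := Real.log_neg hb₀ hb₁
  set s := τ / 2 / -Real.log b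
  have hs : 0 < s := div_pos (half_pos hτ') (neg_pos.2 hlog)
  calc PSent T μ δ ≤ RDistLInftyS T μ ε s +
        ENNReal.ofReal (Fintype.card (Fin M) * b - s * Real.log b) :=
        PSent_le_RDistLInftyS_add hT hε hδ hcolor hb₀ hb₁.le hs
    _ ≤ RDistLInfty T μ ε + τ := by
        gcongr
        · exact le_iSup₂_of_le s hs le_rfl
        · refine ENNReal.ofReal_le_of_le_toReal ?_
          have : s * -Real.log b = τ / 2 := div_mul_cancel₀ _ (neg_pos.2 hlog).ne'
          rw [Fintype.card_fin, ENNReal.coe_toReal]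
          linarith

/-- Lemma 3.2 (second inequality): for every `ε > 0` and every ergodic invariant Borel
probability measure `μ`, `PS_μ(T,d,6ε) ≤ R_{μ,L∞}(ε)`. -/
theorem stmt4 {X : Type*} [MetricSpace X] [CompactSpace X] [MeasurableSpace X] [BorelSpace X]
    (T : X → X) (hT : Continuous T)
    (ε : ℝ) (hε : 0 < ε)
    (μ : Measure X) (hμp : IsProbabilityMeasure μ) (hμerg : Ergodic T μ) :
    PSent T ⟨μ, hμp⟩ (6 * ε) ≤ RDistLInfty T μ ε :=
  stmt4_general isCompact_univ.totallyBounded hT hε (by linarith) ⟨μ, hμp⟩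
end
end

section
/- Let (X,T) be a topological dynamical system with a compatible metric d. Then the upper metric mean dimension satisfies mdim_M^+(T,X,d) = limsup_{ε→0} [ sup_{μ∈E(X,T)} ḥ^K_μ(T,ε) ] / log(1/ε) = limsup_{ε→0} [ sup_{μ∈E(X,T)} h̄^K_μ(T,ε) ] / log(1/ε), where the suprema are over all ergodic T-invariant Borel probability measures. -/
open Filter MeasureTheory Set
open scoped ENNReal Topology

noncomputable section

open MMD

/-!
A spanning set of the whole space also covers a set of measure larger than `1 - δ`, so Katok's
numbers are bounded by the spanning numbers. For the converse, suppose that the lower Katok entropy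
at scale `ε` of every ergodic measure is below `c`. Then for infinitely many `n` most points, with
respect to an ergodic measure, are `ε`-shadowed for `n` steps by at most `exp (c * n)` sequences. An
orbit that spends almost all its time in such a good set is cut greedily into good blocks of length
`n` and few single steps, which bounds the number of sequences shadowing all such orbits of length
`N`, now for every large `N`.

The ergodic components of an invariant measure `μ` are the conditional measures of `μ` with respect
to the invariant `σ`-algebra. By the mean ergodic theorem most orbits visit the good sets of their
component with the right frequency. Hence good sets exist for `μ` as well, at a slightly larger
scale, where countably many good sets suffice. Limit points of empirical measures are invariant and
the invariant measures form a weak* compact set, so finitely many open good sets serve all orbits.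
This bounds the spanning numbers at scale `4 * ε`, and the factor `4` disappears after division by
`log (1 / ε)`.
-/

namespace MMD

section MeanErgodicTheorem

variable {Ω : Type*} [MeasurableSpace Ω] {μ : Measure Ω} {T : Ω → Ω}

lemma comp_iterate_ae_eq_of_comp_ae_eq {β : Type*} (hT : Measure.QuasiMeasurePreserving T μ μ)
    {g : Ω → β} (hg : g ∘ T =ᵐ[μ] g) (n : ℕ) : g ∘ T^[n] =ᵐ[μ] g := by
  induction n with
  | zero => rfl
  | succ n ih => exact (hT.ae_eq_comp ih).trans hg

/- Invariance of `g` holds only almost everywhere; `limsup g (T^n x)` is invariant everywhere. -/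
lemma aestronglyMeasurable_invariants_of_comp_ae_eq (hT : Measure.QuasiMeasurePreserving T μ μ)
    {g : Ω → ℝ} (hg : AEStronglyMeasurable g μ) (hgT : g ∘ T =ᵐ[μ] g) :
    AEStronglyMeasurable[MeasurableSpace.invariants T] g μ := by
  set g₀ := hg.mk g
  have hgg₀ : g =ᵐ[μ] g₀ := hg.ae_eq_mk
  have hg₀T : g₀ ∘ T =ᵐ[μ] g₀ := (hT.ae_eq_comp hgg₀).symm.trans (hgT.trans hgg₀)
  let g₁ : Ω → ℝ := fun x => limsup (fun n => g₀ (T^[n] x)) atTop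
  have hg₁_measurable : Measurable g₁ := .limsup fun n =>
    hg.stronglyMeasurable_mk.measurable.comp (hT.measurable.iterate n)
  have hg₁T : g₁ ∘ T = g₁ :=
    funext fun x => limsup_nat_add (fun n => g₀ (T^[n] x)) 1
  refine ⟨g₁, Measurable.stronglyMeasurable ?_, hgg₀.trans ?_⟩
  · rw [MeasurableSpace.measurable_invariants_dom]
    exact ⟨hg₁_measurable, fun s _ => by rw [hg₁T]⟩
  · filter_upwards [ae_all_iff.2 (comp_iterate_ae_eq_of_comp_ae_eq hT hg₀T)] with x hx
    simp only [Function.comp_apply] at hx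
    simp only [g₁, hx, limsup_const]

/-- The Koopman operator `F ↦ F ∘ T` on `L²(μ)`, to which von Neumann's theorem applies. -/
def koopman (hT : MeasurePreserving T μ μ) : Lp ℝ 2 μ →L[ℝ] Lp ℝ 2 μ :=
  (Lp.compMeasurePreservingₗᵢ ℝ T hT).toContinuousLinearMap

lemma norm_koopman_le (hT : MeasurePreserving T μ μ) : ‖koopman hT‖ ≤ 1 :=
  LinearIsometry.norm_toContinuousLinearMap_le _

lemma coeFn_iterate_koopman (hT : MeasurePreserving T μ μ) (F : Lp ℝ 2 μ) (n : ℕ) :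
    (koopman hT)^[n] F =ᵐ[μ] F ∘ T^[n] := by
  have hiterate : (koopman hT)^[n] F = Lp.compMeasurePreserving T^[n] (hT.iterate n) F := by
    rw [← Lp.compMeasurePreserving_iterate]; rfl
  rw [hiterate]
  exact Lp.coeFn_compMeasurePreserving F (hT.iterate n)

lemma coeFn_birkhoffAverage_koopman (hT : MeasurePreserving T μ μ) (F : Lp ℝ 2 μ) (N : ℕ) :
    (birkhoffAverage ℝ (koopman hT) id N F : Lp ℝ 2 μ) =ᵐ[μ] birkhoffAverage ℝ T F N := by
  have hsum := Lp.coeFn_finsetSum (Finset.range N) fun j => (koopman hT)^[j] F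
  filter_upwards [Lp.coeFn_smul (N : ℝ)⁻¹ (∑ j ∈ Finset.range N, (koopman hT)^[j] F), hsum,
    ae_all_iff.2 (coeFn_iterate_koopman hT F)] with x hsmul hsum hiterate
  simp only [birkhoffAverage, birkhoffSum, id, hsmul, Pi.smul_apply, hsum, Finset.sum_apply,
    hiterate, Function.comp_apply]

lemma indicatorConstLp_mem_eqLocus_koopman [IsFiniteMeasure μ] (hT : MeasurePreserving T μ μ)
    {s : Set Ω} (hs : MeasurableSet s) (hsT : T ⁻¹' s = s) :
    indicatorConstLp 2 hs (measure_ne_top μ s) 1 ∈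
      (koopman hT : Lp ℝ 2 μ →ₗ[ℝ] Lp ℝ 2 μ).eqLocus (1 : Lp ℝ 2 μ →L[ℝ] Lp ℝ 2 μ) := by
  change Lp.compMeasurePreserving T hT _ = _
  rw [Lp.indicatorConstLp_compMeasurePreserving]
  congr

lemma orthogonalProjectionOnto_eqLocus_koopman_ae_eq_condExp [IsFiniteMeasure μ]
    (hT : MeasurePreserving T μ μ) (F : Lp ℝ 2 μ) :
    (((koopman hT : Lp ℝ 2 μ →ₗ[ℝ] Lp ℝ 2 μ).eqLocus
      (1 : Lp ℝ 2 μ →L[ℝ] Lp ℝ 2 μ)).orthogonalProjectionOnto F : Lp ℝ 2 μ) =ᵐ[μ]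
      μ[F | MeasurableSpace.invariants T] := by
  set K := (koopman hT : Lp ℝ 2 μ →ₗ[ℝ] Lp ℝ 2 μ).eqLocus (1 : Lp ℝ 2 μ →L[ℝ] Lp ℝ 2 μ)
  set G : Lp ℝ 2 μ := (K.orthogonalProjectionOnto F : Lp ℝ 2 μ)
  have hG_fixed : koopman hT G = G := (K.orthogonalProjectionOnto F).2
  have hGT : (G : Ω → ℝ) ∘ T =ᵐ[μ] G := by
    simpa only [Function.iterate_one, hG_fixed] using (coeFn_iterate_koopman hT G 1).symm
  have integrable (F : Lp ℝ 2 μ) : Integrable F μ := (Lp.memLp F).integrable one_le_two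
  refine ae_eq_condExp_of_forall_setIntegral_eq (MeasurableSpace.invariants_le T) (integrable F)
    (fun s _ _ => (integrable G).integrableOn) (fun s hs _ => ?_)
    (aestronglyMeasurable_invariants_of_comp_ae_eq hT.quasiMeasurePreserving
      (Lp.aestronglyMeasurable G) hGT)
  obtain ⟨hs, hsT⟩ := MeasurableSpace.measurableSet_invariants.1 hs
  have horthogonal : inner ℝ (indicatorConstLp 2 hs (measure_ne_top μ s) 1) (F - G) = 0 :=
    (Submodule.mem_orthogonal _ _).1 (K.sub_starProjection_mem_orthogonal F) _
      (indicatorConstLp_mem_eqLocus_koopman hT hs hsT)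
  rw [inner_sub_right, sub_eq_zero, L2.inner_indicatorConstLp_one hs,
    L2.inner_indicatorConstLp_one hs] at horthogonal
  exact horthogonal.symm

theorem tendstoInMeasure_birkhoffAverage_condExp [IsFiniteMeasure μ]
    (hT : MeasurePreserving T μ μ) {f : Ω → ℝ} (hf : MemLp f 2 μ) :
    TendstoInMeasure μ (fun N => birkhoffAverage ℝ T f N) atTop
      (μ[f | MeasurableSpace.invariants T]) := by
  have hlim := (koopman hT).tendsto_birkhoffAverage_orthogonalProjection (norm_koopman_le hT)
    hf.toLp
  refine (tendstoInMeasure_of_tendsto_Lp hlim).congr (fun N => ?_) ?_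
  · exact (coeFn_birkhoffAverage_koopman hT hf.toLp N).trans
      (hT.quasiMeasurePreserving.birkhoffAverage_ae_eq_of_ae_eq ℝ hf.coeFn_toLp N)
  · exact (orthogonalProjectionOnto_eqLocus_koopman_ae_eq_condExp hT hf.toLp).trans
      (condExp_congr_ae hf.coeFn_toLp)

lemma condExp_comp_ae_eq [IsFiniteMeasure μ] (hT : MeasurePreserving T μ μ)
    {f : Ω → ℝ} (hf : Integrable f μ) :
    μ[f ∘ T | MeasurableSpace.invariants T] =ᵐ[μ] μ[f | MeasurableSpace.invariants T] := by
  have hle := MeasurableSpace.invariants_le T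
  refine (ae_eq_condExp_of_forall_setIntegral_eq hle (hT.integrable_comp_of_integrable hf)
    (fun s _ _ => integrable_condExp.integrableOn) (fun s hs _ => ?_)
    stronglyMeasurable_condExp.aestronglyMeasurable).symm
  obtain ⟨hs', hsT⟩ := MeasurableSpace.measurableSet_invariants.1 hs
  have hTs : MeasurePreserving T (μ.restrict s) (μ.restrict s) := by
    simpa only [hsT] using hT.restrict_preimage hs'
  calc ∫ x in s, (μ[f | MeasurableSpace.invariants T]) x ∂μ
      = ∫ x in s, f x ∂μ := setIntegral_condExp hle hf hs
    _ = ∫ x, f x ∂(μ.restrict s).map T := by rw [hTs.map_eq]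
    _ = ∫ x in s, (f ∘ T) x ∂μ :=
        integral_map hTs.aemeasurable (by rw [hTs.map_eq]; exact hf.1.restrict)

end MeanErgodicTheorem

section ErgodicityCriterion

variable {Ω : Type*} [MeasurableSpace Ω] {ν : Measure Ω} [IsProbabilityMeasure ν] {T : Ω → Ω}

lemma measureReal_inter_eq_mul_of_tendsto_birkhoffAverage (hT : MeasurePreserving T ν ν)
    {A B : Set Ω} (hA : MeasurableSet A) {ns : ℕ → ℕ} (hns : Tendsto ns atTop atTop)
    (hlim : ∀ᵐ y ∂ν, Tendsto (fun k => birkhoffAverage ℝ T (A.indicator 1) (ns k) y) atTop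
      (𝓝 (ν.real A)))
    (hB : MeasurableSet B) (hBT : T ⁻¹' B = B) :
    ν.real (A ∩ B) = ν.real A * ν.real B := by
  have hle := MeasurableSpace.invariants_le T
  have hA_memLp : MemLp (A.indicator (1 : Ω → ℝ)) 2 ν := (memLp_const (1 : ℝ)).indicator hA
  obtain ⟨ks, hks, hlim_condExp⟩ :=
    ((tendstoInMeasure_birkhoffAverage_condExp hT hA_memLp).comp hns).exists_seq_tendsto_ae
  have hcondExp : ν[A.indicator 1 | MeasurableSpace.invariants T] =ᵐ[ν] fun _ => ν.real A := by
    filter_upwards [hlim, hlim_condExp] with y hy hy'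
    exact tendsto_nhds_unique hy' (hy.comp hks.tendsto_atTop)
  calc ν.real (A ∩ B)
      = ∫ y in B, A.indicator 1 y ∂ν := by
        rw [integral_indicator_one hA, measureReal_restrict_apply hA]
    _ = ∫ y in B, (ν[A.indicator 1 | MeasurableSpace.invariants T]) y ∂ν :=
        (setIntegral_condExp hle (hA_memLp.integrable one_le_two)
          (MeasurableSpace.measurableSet_invariants.2 ⟨hB, hBT⟩)).symm
    _ = ∫ _ in B, ν.real A ∂ν := integral_congr_ae (ae_restrict_of_ae hcondExp)
    _ = ν.real A * ν.real B := by rw [setIntegral_const, smul_eq_mul, mul_comm]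

lemma measure_eq_zero_or_one_of_forall_inter {𝒜 : Set (Set Ω)}
    (hgen : ‹MeasurableSpace Ω› = MeasurableSpace.generateFrom 𝒜) (hpi : IsPiSystem 𝒜)
    {B : Set Ω} (hinter : ∀ A ∈ 𝒜, ν.real (A ∩ B) = ν.real A * ν.real B) : ν B = 0 ∨ ν B = 1 := by
  have hrestrict : ν.restrict B = ν B • ν := by
    refine ext_of_generate_finite 𝒜 hgen hpi (fun A hA => ?_) (by simp)
    have hA_meas : MeasurableSet A := hgen ▸ MeasurableSpace.measurableSet_generateFrom hA
    rw [Measure.restrict_apply hA_meas, Measure.smul_apply, smul_eq_mul,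
      ← ofReal_measureReal, hinter A hA, ENNReal.ofReal_mul measureReal_nonneg,
      ofReal_measureReal, ofReal_measureReal, mul_comm]
  have hsq : ν B = ν B * ν B := by
    simpa using congrArg (fun ρ : Measure Ω => ρ B) hrestrict
  rcases eq_or_ne (ν B) 0 with hzero | hne
  · exact .inl hzero
  · exact .inr ((ENNReal.mul_eq_left hne (measure_ne_top _ _)).1 hsq.symm)

theorem ergodic_of_tendsto_birkhoffAverage (hT : MeasurePreserving T ν ν) {𝒜 : Set (Set Ω)}
    (hgen : ‹MeasurableSpace Ω› = MeasurableSpace.generateFrom 𝒜) (hpi : IsPiSystem 𝒜)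
    (hlim : ∀ A ∈ 𝒜, ∃ ns : ℕ → ℕ, Tendsto ns atTop atTop ∧
      ∀ᵐ y ∂ν, Tendsto (fun k => birkhoffAverage ℝ T (A.indicator 1) (ns k) y) atTop
        (𝓝 (ν.real A))) :
    Ergodic T ν := by
  refine ⟨hT, ⟨fun B hB hBT => ?_⟩⟩
  rw [eventuallyConst_set', ae_eq_empty, ae_eq_univ, prob_compl_eq_zero_iff hB]
  refine measure_eq_zero_or_one_of_forall_inter hgen hpi fun A hA => ?_
  obtain ⟨ns, hns, hlim⟩ := hlim A hA
  exact measureReal_inter_eq_mul_of_tendsto_birkhoffAverage hT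
    (hgen ▸ MeasurableSpace.measurableSet_generateFrom hA) hns hlim hB hBT

end ErgodicityCriterion

section CondExpKernel

open ProbabilityTheory

variable {Ω : Type*} {m : MeasurableSpace Ω} [mΩ : MeasurableSpace Ω] [StandardBorelSpace Ω]
  {μ : Measure Ω} [IsFiniteMeasure μ]

lemma ae_ae_condExpKernel_of_ae (hm : m ≤ mΩ) {p : Ω → Prop} (h : ∀ᵐ y ∂μ, p y) :
    ∀ᵐ x ∂μ, ∀ᵐ y ∂condExpKernel μ m x, p y := by
  rw [← condExpKernel_comp_trim (μ := μ) hm] at h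
  exact ae_of_ae_trim hm (Measure.ae_ae_of_ae_comp h)

lemma ae_ae_condExpKernel_mem_iff (hm : m ≤ mΩ) {s : Set Ω} (hs : MeasurableSet[m] s) :
    ∀ᵐ x ∂μ, ∀ᵐ y ∂condExpKernel μ m x, (y ∈ s ↔ x ∈ s) := by
  have hcondExp : μ[s.indicator (fun _ => (1 : ℝ)) | m] = s.indicator fun _ => 1 :=
    condExp_of_stronglyMeasurable hm (stronglyMeasurable_const.indicator hs)
      ((integrable_const _).indicator (hm s hs))
  have hkernel := condExpKernel_ae_eq_condExp (μ := μ) hm (hm s hs)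
  rw [hcondExp] at hkernel
  filter_upwards [hkernel] with x hx
  by_cases hxs : x ∈ s
  · rw [indicator_of_mem hxs, measureReal_def, ENNReal.toReal_eq_one_iff] at hx
    filter_upwards [(mem_ae_iff_prob_eq_one (hm s hs)).2 hx] with y hy using iff_of_true hy hxs
  · rw [indicator_of_notMem hxs, measureReal_eq_zero_iff] at hx
    filter_upwards [measure_eq_zero_iff_ae_notMem.1 hx] with y hy using iff_of_false hy hxs

lemma ae_ae_condExpKernel_eq (hm : m ≤ mΩ) {β : Type*} [MeasurableSpace β]
    [MeasurableSpace.CountablySeparated β] {g : Ω → β} (hg : Measurable[m] g) :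
    ∀ᵐ x ∂μ, ∀ᵐ y ∂condExpKernel μ m x, g y = g x := by
  obtain ⟨S, hS, hS_meas, hS_sep⟩ := exists_countable_separating β MeasurableSet univ
  have hmem := (ae_ball_iff hS).2 fun s hs =>
    ae_ae_condExpKernel_mem_iff (μ := μ) hm (hg (hS_meas s hs))
  filter_upwards [hmem] with x hx
  filter_upwards [(ae_ball_iff hS).2 hx] with y hy
  exact hS_sep _ (mem_univ _) _ (mem_univ _) hy

end CondExpKernel

section ErgodicDecomposition

open ProbabilityTheory

variable {Ω : Type*} [mΩ : MeasurableSpace Ω] [StandardBorelSpace Ω] {μ : Measure Ω}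
  [IsFiniteMeasure μ] {T : Ω → Ω}

lemma ae_condExpKernel_preimage_eq (hT : MeasurePreserving T μ μ) {A : Set Ω}
    (hA : MeasurableSet A) :
    ∀ᵐ x ∂μ, condExpKernel μ (MeasurableSpace.invariants T) x (T ⁻¹' A) =
      condExpKernel μ (MeasurableSpace.invariants T) x A := by
  have hle := MeasurableSpace.invariants_le T
  filter_upwards [condExpKernel_ae_eq_condExp (μ := μ) hle (hT.measurable hA),
    condExpKernel_ae_eq_condExp (μ := μ) hle hA,
    condExp_comp_ae_eq hT ((integrable_const (1 : ℝ)).indicator hA)] with x hpre hx hcomp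
  rw [← measureReal_eq_measureReal_iff, hpre, hx, ← hcomp]
  rfl

theorem tendstoInMeasure_birkhoffAverage_condExpKernel (hT : MeasurePreserving T μ μ) {A : Set Ω}
    (hA : MeasurableSet A) :
    TendstoInMeasure μ (fun N => birkhoffAverage ℝ T (A.indicator (1 : Ω → ℝ)) N) atTop
      fun x => (condExpKernel μ (MeasurableSpace.invariants T) x).real A :=
  (tendstoInMeasure_birkhoffAverage_condExp hT ((memLp_const (1 : ℝ)).indicator hA)).congr_right
    (condExpKernel_ae_eq_condExp (MeasurableSpace.invariants_le T) hA).symm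

lemma exists_ae_tendsto_birkhoffAverage_condExpKernel (hT : MeasurePreserving T μ μ) {A : Set Ω}
    (hA : MeasurableSet A) :
    ∃ ns : ℕ → ℕ, Tendsto ns atTop atTop ∧
      ∀ᵐ x ∂μ, ∀ᵐ y ∂condExpKernel μ (MeasurableSpace.invariants T) x,
        Tendsto (fun k => birkhoffAverage ℝ T (A.indicator 1) (ns k) y) atTop
          (𝓝 ((condExpKernel μ (MeasurableSpace.invariants T) x).real A)) := by
  have hle := MeasurableSpace.invariants_le T
  obtain ⟨ns, hns, hlim⟩ :=
    (tendstoInMeasure_birkhoffAverage_condExpKernel hT hA).exists_seq_tendsto_ae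
  have hkernel_measurable : Measurable[MeasurableSpace.invariants T]
      fun x => (condExpKernel μ (MeasurableSpace.invariants T) x).real A :=
    (measurable_condExpKernel hA).ennreal_toReal
  refine ⟨ns, hns.tendsto_atTop, ?_⟩
  filter_upwards [ae_ae_condExpKernel_of_ae hle hlim,
    ae_ae_condExpKernel_eq hle hkernel_measurable] with x hlim hconst
  filter_upwards [hlim, hconst] with y hlim hconst
  rwa [← hconst]

theorem ae_ergodic_condExpKernel (hT : MeasurePreserving T μ μ) :
    ∀ᵐ x ∂μ, Ergodic T (condExpKernel μ (MeasurableSpace.invariants T) x) := by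
  set 𝒜 := generateSetAlgebra (MeasurableSpace.countableGeneratingSet Ω)
  have hcount : 𝒜.Countable :=
    countable_generateSetAlgebra MeasurableSpace.countable_countableGeneratingSet
  have hgen : mΩ = MeasurableSpace.generateFrom 𝒜 := by
    rw [generateFrom_generateSetAlgebra_eq, MeasurableSpace.generateFrom_countableGeneratingSet]
  have hpi : IsPiSystem 𝒜 := isSetAlgebra_generateSetAlgebra.isSetRing.isSetSemiring.isPiSystem
  have hmeas : ∀ A ∈ 𝒜, MeasurableSet A := fun A hA =>
    hgen ▸ MeasurableSpace.measurableSet_generateFrom hA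
  choose! ns hns hlim using fun A hA =>
    exists_ae_tendsto_birkhoffAverage_condExpKernel hT (hmeas A hA)
  filter_upwards [(ae_ball_iff hcount).2 fun A hA => ae_condExpKernel_preimage_eq hT (hmeas A hA),
    (ae_ball_iff hcount).2 hlim] with x hpreimage hlim
  refine ergodic_of_tendsto_birkhoffAverage ⟨hT.measurable, ?_⟩ hgen hpi
    fun A hA => ⟨ns A, hns A hA, hlim A hA⟩
  have := Measure.isProbabilityMeasure_map (μ := condExpKernel μ (MeasurableSpace.invariants T) x)
    hT.measurable.aemeasurable
  refine ext_of_generate_finite 𝒜 hgen hpi (fun A hA => ?_) (by simp)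
  rw [Measure.map_apply hT.measurable (hmeas A hA), hpreimage A hA]

end ErgodicDecomposition

section Shadowing

variable {X : Type*} [PseudoMetricSpace X] {T : X → X} {r : ℝ} {n : ℕ} {A : Set X} {a : ℝ}

/-- The points whose first `n` iterates stay `r`-close to one of the sequences in `E`. Arbitrary
sequences are allowed, rather than orbits only, so that they can be concatenated. -/
def shadowed (T : X → X) (r : ℝ) (n : ℕ) (E : Finset (ℕ → X)) : Set X :=
  {x | ∃ z ∈ E, ∀ j < n, dist (T^[j] x) (z j) < r}

/-- The set `A` is `r`-shadowed for `n` steps by at most `a` sequences. The bound `a` is real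
because exponential bounds `exp (c * n)` are what it is used for. -/
def IsShadowedBy (T : X → X) (r : ℝ) (n : ℕ) (A : Set X) (a : ℝ) : Prop :=
  ∃ E : Finset (ℕ → X), (E.card : ℝ) ≤ a ∧ A ⊆ shadowed T r n E

lemma shadowed_eq_biUnion_biInter_preimage_ball (T : X → X) (r : ℝ) (n : ℕ)
    (E : Finset (ℕ → X)) :
    shadowed T r n E = ⋃ z ∈ E, ⋂ j ∈ Finset.range n, T^[j] ⁻¹' Metric.ball (z j) r := by
  ext x
  simp only [shadowed, mem_ofPred_eq, mem_iUnion, mem_iInter, mem_preimage, Metric.mem_ball,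
    Finset.mem_range, exists_prop]

lemma isOpen_shadowed (hT : Continuous T) (r : ℝ) (n : ℕ) (E : Finset (ℕ → X)) :
    IsOpen (shadowed T r n E) := by
  rw [shadowed_eq_biUnion_biInter_preimage_ball]
  exact isOpen_biUnion fun z _ => isOpen_biInter_finset fun j _ =>
    Metric.isOpen_ball.preimage (hT.iterate j)

lemma measurableSet_shadowed [MeasurableSpace X] [OpensMeasurableSpace X] (hT : Measurable T)
    (r : ℝ) (n : ℕ) (E : Finset (ℕ → X)) : MeasurableSet (shadowed T r n E) := by
  rw [shadowed_eq_biUnion_biInter_preimage_ball]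
  exact .biUnion E.countable_toSet fun z _ => .biInter (Finset.range n).countable_toSet
    fun j _ => hT.iterate j measurableSet_ball

lemma shadowed_mono {E F : Finset (ℕ → X)} (h : E ⊆ F) : shadowed T r n E ⊆ shadowed T r n F :=
  fun _ ⟨z, hz, hxz⟩ => ⟨z, h hz, hxz⟩

namespace IsShadowedBy

lemma mono {B : Set X} {b : ℝ} (hA : IsShadowedBy T r n A a) (hBA : B ⊆ A) (hab : a ≤ b) :
    IsShadowedBy T r n B b :=
  let ⟨E, hE, hAE⟩ := hA
  ⟨E, hE.trans hab, hBA.trans hAE⟩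

lemma nonneg (hA : IsShadowedBy T r n A a) : 0 ≤ a :=
  let ⟨E, hE, _⟩ := hA
  E.card.cast_nonneg.trans hE

lemma empty (T : X → X) (r : ℝ) (n : ℕ) : IsShadowedBy T r n ∅ 0 :=
  ⟨∅, by simp, empty_subset _⟩

lemma union {B : Set X} {b : ℝ} (hA : IsShadowedBy T r n A a) (hB : IsShadowedBy T r n B b) :
    IsShadowedBy T r n (A ∪ B) (a + b) := by
  classical
  obtain ⟨E, hE, hAE⟩ := hA
  obtain ⟨F, hF, hBF⟩ := hB
  refine ⟨E ∪ F, ?_, union_subset (hAE.trans (shadowed_mono Finset.subset_union_left))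
    (hBF.trans (shadowed_mono Finset.subset_union_right))⟩
  calc ((E ∪ F).card : ℝ) ≤ E.card + F.card := by exact_mod_cast Finset.card_union_le E F
    _ ≤ a + b := add_le_add hE hF

lemma biUnion {ι : Type*} (J : Finset ι) {A : ι → Set X}
    (hA : ∀ i ∈ J, IsShadowedBy T r n (A i) a) :
    IsShadowedBy T r n (⋃ i ∈ J, A i) (J.card * a) := by
  classical
  induction J using Finset.induction_on with
  | empty => simpa using empty T r n
  | insert i J hi ih =>
    rw [Finset.set_biUnion_insert, Finset.card_insert_of_notMem hi]
    exact ((hA i (Finset.mem_insert_self i J)).union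
      (ih fun k hk => hA k (Finset.mem_insert_of_mem hk))).mono Subset.rfl (by push_cast; linarith)

lemma zero_steps (T : X → X) (r : ℝ) (A : Set X) : IsShadowedBy T r 0 A 1 := by
  rcases A.eq_empty_or_nonempty with rfl | ⟨x, -⟩
  · exact (empty T r 0).mono Subset.rfl zero_le_one
  · exact ⟨{fun _ => x}, by simp, fun y _ => ⟨_, Finset.mem_singleton_self _, by simp⟩⟩

lemma inter_preimage {k : ℕ} {B : Set X} {b : ℝ} (hA : IsShadowedBy T r n A a)
    (hB : IsShadowedBy T r k B b) : IsShadowedBy T r (n + k) (A ∩ T^[n] ⁻¹' B) (a * b) := by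
  classical
  have ha := hA.nonneg
  obtain ⟨E, hE, hAE⟩ := hA
  obtain ⟨F, hF, hBF⟩ := hB
  let concat : (ℕ → X) × (ℕ → X) → ℕ → X := fun p j => if j < n then p.1 j else p.2 (j - n)
  refine ⟨(E ×ˢ F).image concat, ?_, fun x hx => ?_⟩
  · calc (((E ×ˢ F).image concat).card : ℝ) ≤ E.card * F.card := by
          exact_mod_cast Finset.card_image_le.trans_eq (Finset.card_product E F)
      _ ≤ a * b := by gcongr
  · obtain ⟨y, hy, hxy⟩ := hAE hx.1
    obtain ⟨z, hz, hxz⟩ := hBF hx.2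
    refine ⟨concat (y, z), Finset.mem_image_of_mem _ (Finset.mk_mem_product hy hz),
      fun j hj => ?_⟩
    by_cases hjn : j < n
    · simpa only [concat, if_pos hjn] using hxy j hjn
    · have hxz' := hxz (j - n) (by lia)
      rw [← Function.iterate_add_apply, Nat.sub_add_cancel (by lia)] at hxz'
      simpa only [concat, if_neg hjn] using hxz'

lemma univ_pow (h : IsShadowedBy T r 1 univ a) (N : ℕ) : IsShadowedBy T r N univ (a ^ N) := by
  induction N with
  | zero => simpa only [pow_zero] using zero_steps T r univ
  | succ N ih => simpa only [preimage_univ, inter_univ, pow_succ] using ih.inter_preimage h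

lemma exists_isOpen (hT : Continuous T) (hA : IsShadowedBy T r n A a) :
    ∃ U, IsOpen U ∧ A ⊆ U ∧ IsShadowedBy T r n U a :=
  let ⟨E, hE, hAE⟩ := hA
  ⟨shadowed T r n E, isOpen_shadowed hT r n E, hAE, E, hE, Subset.rfl⟩

lemma exists_subset_of_dense (hA : IsShadowedBy T r n A a) {D : Set (ℕ → X)} (hD : Dense D)
    {r' : ℝ} (hr : r < r') :
    ∃ E : Finset (ℕ → X), ↑E ⊆ D ∧ (E.card : ℝ) ≤ a ∧ A ⊆ shadowed T r' n E := by
  classical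
  obtain ⟨E, hE, hAE⟩ := hA
  have happrox : ∀ z : ℕ → X, ∃ z' ∈ D, ∀ j < n, dist (z j) (z' j) < r' - r := by
    intro z
    have hopen : IsOpen (⋂ j ∈ Finset.range n, {z' : ℕ → X | dist (z j) (z' j) < r' - r}) :=
      isOpen_biInter_finset fun j _ =>
        isOpen_lt (continuous_const.dist (continuous_apply j)) continuous_const
    obtain ⟨z', hz', hz'D⟩ := hD.inter_open_nonempty _ hopen ⟨z, by simp [hr]⟩
    exact ⟨z', hz'D, by simpa using hz'⟩
  choose approx happrox_mem happrox_dist using happrox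
  have himage : (↑(E.image approx) : Set (ℕ → X)) ⊆ D := by
    simpa only [Finset.coe_image] using image_subset_iff.2 fun z _ => happrox_mem z
  refine ⟨E.image approx, himage, (Nat.cast_le.2 Finset.card_image_le).trans hE, fun x hx => ?_⟩
  obtain ⟨z, hz, hxz⟩ := hAE hx
  refine ⟨approx z, Finset.mem_image_of_mem _ hz, fun j hj => ?_⟩
  linarith [dist_triangle (T^[j] x) (z j) (approx z j), hxz j hj, happrox_dist z j hj]

end IsShadowedBy

lemma exists_isShadowedBy_univ_one (hX : TotallyBounded (univ : Set X)) (T : X → X)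
    (hr : 0 < r) : ∃ q : ℝ, 1 ≤ q ∧ IsShadowedBy T r 1 univ q := by
  classical
  obtain ⟨S, hS, hcover⟩ := Metric.totallyBounded_iff.1 hX r hr
  refine ⟨max 1 (hS.toFinset.image fun y (_ : ℕ) => y).card, le_max_left _ _,
    hS.toFinset.image fun y _ => y, le_max_right _ _, fun x hx => ?_⟩
  obtain ⟨y, hy, hxy⟩ := mem_iUnion₂.1 (hcover hx)
  refine ⟨fun _ => y, Finset.mem_image_of_mem _ (hS.mem_toFinset.2 hy), fun j hj => ?_⟩
  obtain rfl := Nat.lt_one_iff.1 hj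
  exact Metric.mem_ball.1 hxy

lemma eventually_le_exp_mul (C : ℝ) {κ : ℝ} (hκ : 0 < κ) :
    ∀ᶠ N : ℕ in atTop, C ≤ Real.exp (κ * N) :=
  (Real.tendsto_exp_atTop.comp
    (tendsto_natCast_atTop_atTop.const_mul_atTop hκ)).eventually_ge_atTop C

lemma eventually_isShadowedBy_biUnion {ι : Type*} {J : Finset ι} {A : ι → ℕ → Set X} {c c' : ℝ}
    (hcc' : c < c')
    (hA : ∀ i ∈ J, ∀ᶠ N in atTop, IsShadowedBy T r N (A i N) (Real.exp (c * N))) :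
    ∀ᶠ N in atTop, IsShadowedBy T r N (⋃ i ∈ J, A i N) (Real.exp (c' * N)) := by
  filter_upwards [(Finset.eventually_all J).2 hA,
    eventually_le_exp_mul J.card (sub_pos.2 hcc')] with N hA hJ
  refine (IsShadowedBy.biUnion J hA).mono Subset.rfl ?_
  calc J.card * Real.exp (c * N) ≤ Real.exp ((c' - c) * N) * Real.exp (c * N) := by gcongr
    _ = Real.exp (c' * N) := by rw [← Real.exp_add]; ring_nf

end Shadowing

section Tiling

variable {X : Type*} {T : X → X} {G : Set X}

/-- The number of times `j < N` at which the orbit of `x` lies outside `G`. It counts the steps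
that blocks started in `G` cannot cover. -/
def escapeCount (T : X → X) (G : Set X) : ℕ → X → ℕ :=
  birkhoffSum T (Gᶜ.indicator 1)

lemma escapeCount_one_of_notMem {x : X} (hx : x ∉ G) : escapeCount T G 1 x = 1 := by
  simp [escapeCount, hx]

lemma escapeCount_add (T : X → X) (G : Set X) (n k : ℕ) (x : X) :
    escapeCount T G (n + k) x = escapeCount T G n x + escapeCount T G k (T^[n] x) :=
  birkhoffSum_add T _ n k x

lemma cast_escapeCount (T : X → X) (G : Set X) (N : ℕ) (x : X) :
    (escapeCount T G N x : ℝ) = N * (1 - birkhoffAverage ℝ T (G.indicator 1) N x) := by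
  have hsum : (escapeCount T G N x : ℝ) = N - birkhoffSum T (G.indicator (1 : X → ℝ)) N x := by
    classical
    simp only [escapeCount, birkhoffSum, Nat.cast_sum, eq_sub_iff_add_eq,
      ← Finset.sum_add_distrib, indicator_apply, mem_compl_iff]
    calc _ = ∑ _ ∈ Finset.range N, (1 : ℝ) := Finset.sum_congr rfl fun j _ => by
          split_ifs <;> simp_all
      _ = N := by simp
  rcases eq_or_ne N 0 with rfl | hN
  · simp [escapeCount]
  · rw [hsum, birkhoffAverage, smul_eq_mul]
    field_simp

variable [PseudoMetricSpace X] {r : ℝ}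

/- An orbit with few escapes is cut greedily: a visit to `G` starts a tile of length `n`, any other
point a tile of length one. The factor `1 / 2` in `hG` and the `2` in `2 * q` pay for the choice
between the two. -/
lemma isShadowedBy_setOf_escapeCount_lt {q a : ℝ} (hq : 1 ≤ q) (ha : 0 ≤ a)
    (huniv : IsShadowedBy T r 1 univ q) {n : ℕ} (hn : 0 < n)
    (hG : IsShadowedBy T r n G (Real.exp (a * n) / 2)) (f N : ℕ) :
    IsShadowedBy T r N {x | escapeCount T G N x < f}
      (q ^ n * Real.exp (a * N) * (2 * q) ^ f) := by
  induction f generalizing N with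
  | zero => simpa using (IsShadowedBy.empty T r N).mono Subset.rfl (by positivity)
  | succ f ihf =>
  induction N using Nat.strong_induction_on with
  | _ N ihN =>
  rcases lt_or_ge N n with hNn | hNn
  · refine (huniv.univ_pow N).mono (subset_univ _) ?_
    have hexp : 1 ≤ Real.exp (a * N) := Real.one_le_exp (by positivity)
    have hpow : 1 ≤ (2 * q) ^ (f + 1) := one_le_pow₀ (by linarith)
    calc q ^ N ≤ q ^ n * 1 * 1 := by simpa using pow_le_pow_right₀ hq hNn.le
      _ ≤ q ^ n * Real.exp (a * N) * (2 * q) ^ (f + 1) := by gcongr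
  obtain ⟨m, rfl⟩ := Nat.exists_eq_add_of_le hNn
  obtain ⟨k, hk⟩ : ∃ k, n + m = 1 + k := ⟨n + m - 1, by lia⟩
  have hlong := hG.inter_preimage (ihN m (by lia))
  have hshort := huniv.inter_preimage (ihf k)
  rw [← hk] at hshort
  refine (hlong.union hshort).mono (fun x hx => ?_) ?_
  · by_cases hxG : x ∈ G
    · rw [mem_ofPred_eq, escapeCount_add] at hx
      exact .inl ⟨hxG, (Nat.le_add_left _ _).trans_lt hx⟩
    · refine .inr ⟨mem_univ x, ?_⟩
      rw [mem_ofPred_eq, hk, escapeCount_add, escapeCount_one_of_notMem hxG, add_comm] at hx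
      exact Nat.lt_of_add_lt_add_right hx
  · have hexp_long : Real.exp (a * n) * Real.exp (a * m) = Real.exp (a * (n + m : ℕ)) := by
      rw [← Real.exp_add]; push_cast; ring_nf
    have hexp_short : Real.exp (a * k) ≤ Real.exp (a * (n + m : ℕ)) := by
      rw [hk]; gcongr; lia
    calc _ = Real.exp (a * n) * Real.exp (a * m) * (q ^ n * (2 * q) ^ (f + 1)) / 2
          + q ^ n * Real.exp (a * k) * (2 * q) ^ (f + 1) / 2 := by ring
      _ ≤ Real.exp (a * (n + m : ℕ)) * (q ^ n * (2 * q) ^ (f + 1)) / 2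
          + q ^ n * Real.exp (a * (n + m : ℕ)) * (2 * q) ^ (f + 1) / 2 := by
        rw [hexp_long]; gcongr
      _ = q ^ n * Real.exp (a * (n + m : ℕ)) * (2 * q) ^ (f + 1) := by ring

lemma pow_floor_succ_le_exp {p κ : ℝ} (hp : 1 < p) (hκ : 0 ≤ κ) (N : ℕ) :
    p ^ (⌊κ / Real.log p * N⌋₊ + 1) ≤ p * Real.exp (κ * N) := by
  have hlog : 0 < Real.log p := Real.log_pos hp
  have hfloor : p ^ ⌊κ / Real.log p * N⌋₊ ≤ Real.exp (κ * N) := by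
    rw [← Real.rpow_natCast, Real.rpow_def_of_pos (by linarith)]
    refine Real.exp_le_exp.2 ?_
    calc Real.log p * ⌊κ / Real.log p * N⌋₊ ≤ Real.log p * (κ / Real.log p * N) := by
          gcongr; exact Nat.floor_le (by positivity)
      _ = κ * N := by field_simp
  rw [pow_succ']
  gcongr

theorem exists_eventually_isShadowedBy_setOf_le_birkhoffAverage
    (hX : TotallyBounded (univ : Set X)) (T : X → X) {c c' : ℝ} (hr : 0 < r) (hc : 0 ≤ c)
    (hcc' : c < c') :
    ∃ η > 0, ∀ᶠ n in atTop, ∀ G : Set X, IsShadowedBy T r n G (Real.exp (c * n)) →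
      ∀ᶠ N in atTop, IsShadowedBy T r N
        {x | 1 - η ≤ birkhoffAverage ℝ T (G.indicator (1 : X → ℝ)) N x}
        (Real.exp (c' * N)) := by
  obtain ⟨q, hq, huniv⟩ := exists_isShadowedBy_univ_one hX T hr
  obtain ⟨κ, hκ, rfl⟩ : ∃ κ > 0, c' = c + 3 * κ := ⟨(c' - c) / 3, by linarith, by ring⟩
  have hlog : 0 < Real.log (2 * q) := Real.log_pos (by linarith)
  refine ⟨κ / Real.log (2 * q), by positivity, ?_⟩
  filter_upwards [eventually_gt_atTop 0, eventually_le_exp_mul 2 hκ] with n hn hexp_n G hG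
  have hhalf : Real.exp (c * n) ≤ Real.exp ((c + κ) * n) / 2 := by
    rw [le_div_iff₀ two_pos, add_mul, Real.exp_add]
    gcongr
  filter_upwards [eventually_le_exp_mul (q ^ n * (2 * q)) hκ] with N hexp_N
  refine (isShadowedBy_setOf_escapeCount_lt hq (by positivity) huniv hn (hG.mono Subset.rfl hhalf)
    (⌊κ / Real.log (2 * q) * N⌋₊ + 1) N).mono (fun x hx => ?_) ?_
  · rw [mem_ofPred_eq] at hx
    have hescape : (escapeCount T G N x : ℝ) ≤ κ / Real.log (2 * q) * N := by
      rw [cast_escapeCount, mul_comm]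
      gcongr
      linarith
    exact Nat.lt_succ_of_le (Nat.le_floor hescape)
  · calc q ^ n * Real.exp ((c + κ) * N) * (2 * q) ^ (⌊κ / Real.log (2 * q) * N⌋₊ + 1)
        ≤ q ^ n * Real.exp ((c + κ) * N) * (2 * q * Real.exp (κ * N)) := by
          gcongr; exact pow_floor_succ_le_exp (by linarith) hκ.le N
      _ = q ^ n * (2 * q) * (Real.exp ((c + κ) * N) * Real.exp (κ * N)) := by ring
      _ ≤ Real.exp (κ * N) * (Real.exp ((c + κ) * N) * Real.exp (κ * N)) := by gcongr
      _ = Real.exp ((c + 3 * κ) * N) := by rw [← Real.exp_add, ← Real.exp_add]; ring_nf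

end Tiling

section FiniteUnions

variable {Ω ι : Type*} [MeasurableSpace Ω] {μ : Measure Ω}

lemma exists_finset_lt_measureReal_biUnion [Countable ι] [IsProbabilityMeasure μ] {W : ι → Set Ω}
    (hW : ∀ᵐ x ∂μ, ∃ i, x ∈ W i) {a : ℝ} (ha : a < 1) :
    ∃ J : Finset ι, a < μ.real (⋃ i ∈ J, W i) := by
  have hmono : Monotone fun J : Finset ι => ⋃ i ∈ J, W i := fun J K hJK =>
    biUnion_subset_biUnion_left hJK
  have hunion : μ (⋃ J : Finset ι, ⋃ i ∈ J, W i) = 1 := by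
    rw [← iUnion_eq_iUnion_finset, ← measure_univ (μ := μ)]
    refine measure_congr (eventuallyEq_univ.2 ?_)
    filter_upwards [hW] with x hx using mem_iUnion.2 hx
  have hlim := (ENNReal.tendsto_toReal (measure_ne_top μ _)).comp
    (tendsto_measure_iUnion_atTop (μ := μ) hmono)
  rw [hunion, ENNReal.toReal_one] at hlim
  exact (hlim.eventually_const_lt ha).exists

lemma tendsto_measureReal_biUnion_sdiff_biUnion [IsFiniteMeasure μ] {W : ι → Set Ω}
    {V : ι → ℕ → Set Ω} (J : Finset ι)
    (h : ∀ i ∈ J, Tendsto (fun N => μ.real (W i \ V i N)) atTop (𝓝 0)) :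
    Tendsto (fun N => μ.real ((⋃ i ∈ J, W i) \ ⋃ i ∈ J, V i N)) atTop (𝓝 0) := by
  have hsum : Tendsto (fun N => ∑ i ∈ J, μ.real (W i \ V i N)) atTop (𝓝 0) := by
    simpa only [Finset.sum_const_zero] using tendsto_finsetSum J h
  refine squeeze_zero (fun _ => measureReal_nonneg) (fun N => ?_) hsum
  have hsub : (⋃ i ∈ J, W i) \ ⋃ i ∈ J, V i N ⊆ ⋃ i ∈ J, W i \ V i N := by
    rintro x ⟨hxW, hxV⟩
    obtain ⟨i, hi, hxi⟩ := mem_iUnion₂.1 hxW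
    exact mem_iUnion₂.2 ⟨i, hi, hxi, fun hxVi => hxV (mem_iUnion₂.2 ⟨i, hi, hxVi⟩)⟩
  exact (measureReal_mono hsub (measure_ne_top _ _)).trans (measureReal_biUnion_finset_le J _)

end FiniteUnions

section ErgodicToInvariant

open ProbabilityTheory

lemma tendsto_measureReal_condExpKernel_sdiff_birkhoffAverage {Ω : Type*} [MeasurableSpace Ω]
    [StandardBorelSpace Ω] {μ : Measure Ω} [IsFiniteMeasure μ] {T : Ω → Ω}
    (hT : MeasurePreserving T μ μ) {G : Set Ω} (hG : MeasurableSet G) {a b : ℝ} (hab : a < b) :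
    Tendsto (fun N => μ.real ({x | b < (condExpKernel μ (MeasurableSpace.invariants T) x).real G} \
      {x | a ≤ birkhoffAverage ℝ T (G.indicator (1 : Ω → ℝ)) N x})) atTop (𝓝 0) := by
  refine squeeze_zero (fun _ => measureReal_nonneg) (fun N => measureReal_mono fun x hx => ?_)
    (tendstoInMeasure_iff_measureReal_dist.1
      (tendstoInMeasure_birkhoffAverage_condExpKernel hT hG) (b - a) (sub_pos.2 hab))
  obtain ⟨hb, ha⟩ := hx
  rw [mem_ofPred_eq] at hb
  rw [mem_ofPred_eq, not_le] at ha
  rw [mem_ofPred_eq, dist_comm, Real.dist_eq]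
  exact (by linarith : b - a ≤ _).trans (le_abs_self _)

variable {X : Type*} [PseudoMetricSpace X] {T : X → X} {r r' c c' : ℝ}

/-- For infinitely many `n`, all but an arbitrarily small part of `μ` is `r`-shadowed for `n` steps
by at most `exp (c * n)` sequences. This expresses that Katok's lower entropy of `μ` at scale `r`
is at most `c`. -/
def ShadowRateLE [MeasurableSpace X] (T : X → X) (μ : Measure X) (r c : ℝ) : Prop :=
  ∀ η > 0, ∃ᶠ n in atTop, ∃ G, IsShadowedBy T r n G (Real.exp (c * n)) ∧ 1 - η < μ.real G

lemma exists_countable_shadowing_family (hX : TotallyBounded (univ : Set X)) (T : X → X)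
    (hrr' : r < r') :
    ∃ ℰ : Set (Finset (ℕ → X)), ℰ.Countable ∧ ∀ n A a, IsShadowedBy T r n A a →
      ∃ E ∈ ℰ, (E.card : ℝ) ≤ a ∧ A ⊆ shadowed T r' n E := by
  have : TopologicalSpace.SeparableSpace X := TopologicalSpace.isSeparable_univ_iff.1 hX.isSeparable
  obtain ⟨D, hD_countable, hD⟩ := TopologicalSpace.exists_countable_dense (ℕ → X)
  refine ⟨{E | (E : Set (ℕ → X)) ⊆ D}, ?_, fun n A a hA => hA.exists_subset_of_dense hD hrr'⟩
  refine ((countable_ofPred_finite_subset hD_countable).preimage Finset.coe_injective).mono ?_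
  exact fun E hE => ⟨E.finite_toSet, hE⟩

variable [MeasurableSpace X] [StandardBorelSpace X] [OpensMeasurableSpace X]
  {μ : Measure X} [IsProbabilityMeasure μ]

theorem shadowRateLE_of_forall_ergodic (hX : TotallyBounded (univ : Set X)) (hr : 0 < r)
    (hrr' : r < r') (hc : 0 ≤ c) (hcc' : c < c')
    (hergodic : ∀ ν : Measure X, IsProbabilityMeasure ν → Ergodic T ν → ShadowRateLE T ν r c)
    (hT : MeasurePreserving T μ μ) : ShadowRateLE T μ r' c' := by
  intro η hη
  obtain ⟨c'', hcc'', hc''c'⟩ := exists_between hcc'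
  obtain ⟨δ, hδ, htile⟩ := exists_eventually_isShadowedBy_setOf_le_birkhoffAverage hX T
    (hr.trans hrr') hc hcc''
  obtain ⟨ℰ, hℰ_countable, hℰ⟩ := exists_countable_shadowing_family hX T hrr'
  have := hℰ_countable.to_subtype
  let V : ℕ × ℰ → ℕ → Set X := fun i N =>
    {x | 1 - δ ≤ birkhoffAverage ℝ T ((shadowed T r' i.1 i.2).indicator (1 : X → ℝ)) N x}
  let W : ℕ × ℰ → Set X := fun i =>
    {x | 1 - δ / 2 < (condExpKernel μ (MeasurableSpace.invariants T) x).real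
      (shadowed T r' i.1 i.2)}
  let ι := {i : ℕ × ℰ // ∀ᶠ N in atTop, IsShadowedBy T r' N (V i N) (Real.exp (c'' * N))}
  have hW : ∀ᵐ x ∂μ, ∃ i : ι, x ∈ W i := by
    filter_upwards [ae_ergodic_condExpKernel hT] with x hx
    obtain ⟨n, ⟨G, hG, hlt⟩, htile⟩ :=
      ((hergodic _ inferInstance hx (δ / 2) (by positivity)).and_eventually htile).exists
    obtain ⟨E, hE, hcard, hGE⟩ := hℰ n G _ hG
    exact ⟨⟨(n, ⟨E, hE⟩), htile _ ⟨E, hcard, Subset.rfl⟩⟩, hlt.trans_le (measureReal_mono hGE)⟩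
  obtain ⟨J, hJ⟩ := exists_finset_lt_measureReal_biUnion hW (a := 1 - η / 2) (by linarith)
  have hshadowed : ∀ᶠ N in atTop, IsShadowedBy T r' N (⋃ i ∈ J, V i N) (Real.exp (c' * N)) :=
    eventually_isShadowedBy_biUnion hc''c' fun i _ => i.2
  have hdiff : ∀ᶠ N in atTop, μ.real ((⋃ i ∈ J, W i) \ ⋃ i ∈ J, V i N) < η / 2 :=
    (tendsto_measureReal_biUnion_sdiff_biUnion J fun i _ =>
      tendsto_measureReal_condExpKernel_sdiff_birkhoffAverage hT
        (measurableSet_shadowed hT.measurable r' _ _) (by linarith)).eventually_lt_const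
      (by positivity)
  refine (hshadowed.and hdiff).frequently.mono fun N ⟨hshadowed, hdiff⟩ => ⟨_, hshadowed, ?_⟩
  have hsub : (⋃ i ∈ J, W i) ⊆ (⋃ i ∈ J, V i N) ∪ ((⋃ i ∈ J, W i) \ ⋃ i ∈ J, V i N) :=
    sdiff_subset_iff.1 Subset.rfl
  have hunion := (measureReal_mono (μ := μ) hsub).trans
    (measureReal_union_le (⋃ i ∈ J, V i N) ((⋃ i ∈ J, W i) \ ⋃ i ∈ J, V i N))
  linarith only [hJ, hdiff, hunion]

end ErgodicToInvariant

section EmpiricalMeasures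

variable {X : Type*} [MeasurableSpace X] {T : X → X}

lemma isProbabilityMeasure_empMeas (T : X → X) {N : ℕ} (hN : N ≠ 0) (x : X) :
    IsProbabilityMeasure (empMeas T N x) := by
  refine ⟨?_⟩
  simp only [empMeas, Measure.smul_apply, Measure.coe_finsetSum, Finset.sum_apply, measure_univ,
    Finset.sum_const, Finset.card_range, nsmul_eq_mul, mul_one, smul_eq_mul]
  exact ENNReal.inv_mul_cancel (Nat.cast_ne_zero.2 hN) (ENNReal.natCast_ne_top N)

lemma integral_empMeas_s5 (T : X → X) (N : ℕ) (x : X) {f : X → ℝ} (hf : StronglyMeasurable f) :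
    ∫ y, f y ∂empMeas T N x = birkhoffAverage ℝ T f N x := by
  rw [empMeas, integral_smul_measure,
    integral_finsetSum_measure fun j _ => integrable_dirac' hf enorm_lt_top]
  simp [birkhoffAverage, birkhoffSum, integral_dirac' _ _ hf]

lemma measureReal_empMeas (T : X → X) (N : ℕ) (x : X) {G : Set X} (hG : MeasurableSet G) :
    (empMeas T N x).real G = birkhoffAverage ℝ T (G.indicator (1 : X → ℝ)) N x := by
  rw [← integral_indicator_one hG, integral_empMeas_s5 T N x (stronglyMeasurable_one.indicator hG)]

variable [TopologicalSpace X]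

lemma isOpen_setOf_lt_measureReal [OpensMeasurableSpace X] [HasOuterApproxClosed X] {G : Set X}
    (hG : IsOpen G) (a : ℝ) :
    IsOpen {μ : ProbabilityMeasure X | a < (μ : Measure X).real G} := by
  rcases lt_or_ge a 0 with ha | ha
  · convert isOpen_univ
    exact eq_univ_of_forall fun μ => ha.trans_le measureReal_nonneg
  · simp only [measureReal_def, ← ENNReal.ofReal_lt_iff_lt_toReal ha (measure_ne_top _ G)]
    refine isOpen_iff_eventually.2 fun μ hμ => ?_
    exact eventually_lt_of_lt_liminf
      (hμ.trans_le (ProbabilityMeasure.le_liminf_measure_open_of_tendsto tendsto_id hG))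

variable [BorelSpace X] [HasOuterApproxClosed X]

lemma measurePreserving_of_tendsto_empMeas (hT : Continuous T) {ι : Type*} {L : Filter ι}
    [L.NeBot] {ν : ι → ProbabilityMeasure X} {N : ι → ℕ} {x : ι → X}
    (hν : ∀ i, (ν i : Measure X) = empMeas T (N i) (x i)) (hN : Tendsto N L atTop)
    {μ : ProbabilityMeasure X} (hμ : Tendsto ν L (𝓝 μ)) :
    MeasurePreserving T (μ : Measure X) μ := by
  have := Measure.isProbabilityMeasure_map (μ := (μ : Measure X)) hT.aemeasurable
  refine ⟨hT.measurable, ext_of_forall_integral_eq_of_IsFiniteMeasure fun f => ?_⟩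
  rw [integral_map hT.aemeasurable f.continuous.aestronglyMeasurable]
  have hlim := ProbabilityMeasure.tendsto_iff_forall_integral_tendsto.1 hμ
  have hdist (i : ι) : dist (∫ y, f (T y) ∂(ν i : Measure X)) (∫ y, f y ∂(ν i : Measure X))
      = dist (f (T^[N i] (x i))) (f (x i)) / N i := by
    rw [hν, integral_empMeas_s5 _ _ _ f.continuous.stronglyMeasurable,
      integral_empMeas_s5 _ _ _ (f := fun y => f (T y)) (f.continuous.comp hT).stronglyMeasurable,
      ← dist_birkhoffAverage_apply_birkhoffAverage ℝ]
    simp only [birkhoffAverage, birkhoffSum, ← Function.iterate_succ_apply',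
      Function.iterate_succ_apply]
  have hzero : Tendsto (fun i => dist (f (T^[N i] (x i))) (f (x i)) / N i) L (𝓝 0) :=
    squeeze_zero (fun i => by positivity)
      (fun i => div_le_div_of_nonneg_right (f.dist_le_two_norm _ _) (Nat.cast_nonneg _))
      (tendsto_const_nhds.div_atTop (tendsto_natCast_atTop_atTop.comp hN))
  have hdist_lim := (hlim (f.compContinuous ⟨T, hT⟩)).dist (hlim f)
  exact dist_eq_zero.1 (tendsto_nhds_unique hdist_lim (hzero.congr fun i => (hdist i).symm))

variable [T2Space X] [CompactSpace X]

lemma isCompact_setOf_measurePreserving (hT : Continuous T) :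
    IsCompact {μ : ProbabilityMeasure X | MeasurePreserving T (μ : Measure X) μ} := by
  have hfixed : {μ : ProbabilityMeasure X | MeasurePreserving T (μ : Measure X) μ} =
      {μ | μ.map hT.aemeasurable = μ} := by
    ext μ
    exact ⟨fun h => Subtype.ext h.map_eq, fun h => ⟨hT.measurable, congrArg Subtype.val h⟩⟩
  rw [hfixed]
  exact (isClosed_eq (ProbabilityMeasure.continuous_map hT) continuous_id).isCompact

lemma eventually_mem_of_coe_eq_empMeas (hT : Continuous T) {U : Set (ProbabilityMeasure X)}
    (hU : IsOpen U)
    (h : {μ : ProbabilityMeasure X | MeasurePreserving T (μ : Measure X) μ} ⊆ U) :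
    ∀ᶠ N in atTop, ∀ (x : X) (ν : ProbabilityMeasure X),
      (ν : Measure X) = empMeas T N x → ν ∈ U := by
  by_contra hcon
  obtain ⟨N, hN, hNU⟩ := extraction_of_frequently_atTop (not_eventually.1 hcon)
  push Not at hNU
  choose x ν hν hνU using hNU
  obtain ⟨μ, hμ⟩ : ∃ μ, Tendsto ν (hyperfilter ℕ : Filter ℕ) (𝓝 μ) :=
    ⟨_, ((hyperfilter ℕ).map ν).le_nhds_lim⟩
  have hμ_inv := measurePreserving_of_tendsto_empMeas hT hν
    (hN.tendsto_atTop.mono_left Nat.hyperfilter_le_atTop) hμ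
  obtain ⟨k, hk⟩ := (hμ.eventually (hU.mem_nhds (h hμ_inv))).exists
  exact hνU k hk

end EmpiricalMeasures

section InvariantToTopological

variable {X : Type*} [MetricSpace X] [CompactSpace X] [MeasurableSpace X] [BorelSpace X]
  {T : X → X} {r c c' : ℝ}

theorem eventually_isShadowedBy_univ (hT : Continuous T) (hr : 0 < r) (hc : 0 ≤ c) (hcc' : c < c')
    (hinvariant : ∀ μ : Measure X, IsProbabilityMeasure μ → MeasurePreserving T μ μ →
      ShadowRateLE T μ r c) :
    ∀ᶠ N in atTop, IsShadowedBy T r N univ (Real.exp (c' * N)) := by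
  obtain ⟨c'', hcc'', hc''c'⟩ := exists_between hcc'
  obtain ⟨η, hη, htile⟩ := exists_eventually_isShadowedBy_setOf_le_birkhoffAverage
    isCompact_univ.totallyBounded T hr hc hcc''
  let V : Set X → ℕ → Set X := fun G N =>
    {x | 1 - η ≤ birkhoffAverage ℝ T (G.indicator (1 : X → ℝ)) N x}
  let ι := {G : Set X // IsOpen G ∧
    ∀ᶠ N in atTop, IsShadowedBy T r N (V G N) (Real.exp (c'' * N))}
  let U : ι → Set (ProbabilityMeasure X) := fun G => {μ | 1 - η < (μ : Measure X).real G}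
  have hU (G : ι) : IsOpen (U G) := isOpen_setOf_lt_measureReal G.2.1 _
  have hcover : {μ : ProbabilityMeasure X | MeasurePreserving T (μ : Measure X) μ} ⊆ ⋃ G, U G := by
    intro μ hμ
    obtain ⟨n, ⟨G, hG, hlt⟩, htile⟩ :=
      ((hinvariant μ inferInstance hμ η hη).and_eventually htile).exists
    obtain ⟨G', hG'_open, hGG', hG'⟩ := hG.exists_isOpen hT
    exact mem_iUnion.2 ⟨⟨G', hG'_open, htile G' hG'⟩, hlt.trans_le (measureReal_mono hGG')⟩
  obtain ⟨J, hJ⟩ := (isCompact_setOf_measurePreserving hT).elim_finite_subcover U hU hcover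
  filter_upwards [eventually_mem_of_coe_eq_empMeas hT (isOpen_biUnion fun G _ => hU G) hJ,
    eventually_isShadowedBy_biUnion (J := J) hc''c' fun G _ => G.2.2,
    eventually_ne_atTop 0] with N hmem hshadowed hN
  refine hshadowed.mono (fun x _ => ?_) le_rfl
  obtain ⟨G, hG, hxG⟩ := mem_iUnion₂.1
    (hmem x ⟨empMeas T N x, isProbabilityMeasure_empMeas T hN x⟩ rfl)
  refine mem_iUnion₂.2 ⟨G, hG, ?_⟩
  rw [mem_ofPred_eq, ← measureReal_empMeas T N x G.2.1.measurableSet]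
  exact le_of_lt hxG

end InvariantToTopological

lemma monotone_log_natCast : Monotone fun k : ℕ => Real.log k := by
  intro k m hkm
  rcases k.eq_zero_or_pos with rfl | hk
  · simpa using Real.log_natCast_nonneg m
  · exact Real.log_le_log (Nat.cast_pos.2 hk) (Nat.cast_le.2 hkm)

lemma ofReal_log_natCast_div_le_ofReal_iff {k n : ℕ} (hn : 0 < n) {s : ℝ} (hs : 0 ≤ s) :
    ENNReal.ofReal (Real.log k) / n ≤ ENNReal.ofReal s ↔ (k : ℝ) ≤ Real.exp (s * n) := by
  rw [ENNReal.div_le_iff (by positivity) (by simp), ← ENNReal.ofReal_natCast n,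
    ← ENNReal.ofReal_mul hs, ENNReal.ofReal_le_ofReal_iff (by positivity)]
  rcases k.eq_zero_or_pos with rfl | hk
  · simp only [CharP.cast_eq_zero, Real.log_zero, Real.exp_nonneg, iff_true]
    positivity
  · exact Real.log_le_iff_le_exp (Nat.cast_pos.2 hk)

section SpanningNumbers

variable {X : Type*} [PseudoMetricSpace X] {T : X → X} {r ε : ℝ} {n : ℕ}

lemma bowenDist_lt_iff (hr : 0 < r) {x y : X} :
    bowenDist T n x y < r ↔ ∀ j < n, dist (T^[j] x) (T^[j] y) < r := by
  rcases n.eq_zero_or_pos with rfl | hn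
  · simp [bowenDist, hr]
  · have : Nonempty (Fin n) := ⟨⟨0, hn⟩⟩
    rw [bowenDist, iSup, (finite_range _).csSup_lt_iff (range_nonempty _), forall_mem_range,
      Fin.forall_iff]

lemma bowenDist_comm (T : X → X) (n : ℕ) (x y : X) : bowenDist T n x y = bowenDist T n y x := by
  simp only [bowenDist, dist_comm]

lemma isShadowedBy_biUnion_bowenDist_lt (hr : 0 < r) (E : Finset X) :
    IsShadowedBy T r n (⋃ x ∈ E, {y | bowenDist T n x y < r}) E.card := by
  classical
  refine ⟨E.image fun x j => T^[j] x, Nat.cast_le.2 Finset.card_image_le, fun y hy => ?_⟩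
  obtain ⟨x, hx, hxy⟩ := mem_iUnion₂.1 hy
  rw [mem_ofPred_eq, bowenDist_comm] at hxy
  exact ⟨_, Finset.mem_image_of_mem _ hx, (bowenDist_lt_iff hr).1 hxy⟩

lemma IsShadowedBy.exists_finset_bowenDist_lt {a : ℝ} (hr : 0 < r)
    (h : IsShadowedBy T r n univ a) :
    ∃ E : Finset X, (E.card : ℝ) ≤ a ∧
      ∀ x ∈ (univ : Set X), ∃ y ∈ E, bowenDist T n x y < 2 * r := by
  classical
  rcases isEmpty_or_nonempty X with hX | hX
  · exact ⟨∅, by simpa using h.nonneg, fun x => (hX.false x).elim⟩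
  obtain ⟨F, hF, huniv⟩ := h
  choose! y hy using fun (z : ℕ → X) (h : ∃ y, ∀ j < n, dist (T^[j] y) (z j) < r) => h
  refine ⟨F.image y, (Nat.cast_le.2 Finset.card_image_le).trans hF, fun x hx => ?_⟩
  obtain ⟨z, hz, hxz⟩ := huniv hx
  refine ⟨y z, Finset.mem_image_of_mem y hz, (bowenDist_lt_iff (by positivity)).2 fun j hj => ?_⟩
  linarith [dist_triangle_right (T^[j] x) (T^[j] (y z)) (z j), hxz j hj, hy z ⟨x, hxz⟩ j hj]

lemma IsShadowedBy.spanNum_le {a : ℝ} (hr : 0 < r) (h : IsShadowedBy T r n univ a) :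
    (spanNum T n (2 * r) univ : ℝ) ≤ a := by
  obtain ⟨E, hE, hspan⟩ := h.exists_finset_bowenDist_lt hr
  have hle : spanNum T n (2 * r) univ ≤ E.card := Nat.sInf_le ⟨E, rfl, hspan⟩
  exact (Nat.cast_le.2 hle).trans hE

lemma exists_card_eq_spanNum (hX : TotallyBounded (univ : Set X)) (T : X → X) (n : ℕ)
    (hε : 0 < ε) :
    ∃ E : Finset X, E.card = spanNum T n ε univ ∧
      ∀ x ∈ (univ : Set X), ∃ y ∈ E, bowenDist T n x y < ε := by
  obtain ⟨q, -, hq⟩ := exists_isShadowedBy_univ_one hX T (half_pos hε)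
  obtain ⟨E, -, hE⟩ := (hq.univ_pow n).exists_finset_bowenDist_lt (half_pos hε)
  rw [mul_div_cancel₀ ε two_ne_zero] at hE
  have hne : {k | ∃ E : Finset X, E.card = k ∧
      ∀ x ∈ (univ : Set X), ∃ y ∈ E, bowenDist T n x y < ε}.Nonempty := ⟨_, E, rfl, hE⟩
  exact Nat.sInf_mem hne

lemma spanGrowth_le_of_eventually_isShadowedBy {s : ℝ} (hr : 0 < r) (hs : 0 ≤ s)
    (h : ∀ᶠ n in atTop, IsShadowedBy T r n univ (Real.exp (s * n))) :
    spanGrowth T (2 * r) ≤ ENNReal.ofReal s := by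
  refine limsup_le_of_le (by isBoundedDefault) ?_
  filter_upwards [h, eventually_gt_atTop 0] with n hshadowed hn
  exact (ofReal_log_natCast_div_le_ofReal_iff hn hs).2 (hshadowed.spanNum_le hr)

end SpanningNumbers

section KatokNumbers

variable {X : Type*} [PseudoMetricSpace X] [MeasurableSpace X] {T : X → X} {ε δ c : ℝ}
  {μ : Measure X} [IsProbabilityMeasure μ]

lemma ofReal_one_sub_lt_measure_biUnion_bowenDist_lt (hδ : 0 < δ) {n : ℕ} {E : Finset X}
    (hE : ∀ x ∈ (univ : Set X), ∃ y ∈ E, bowenDist T n x y < ε) :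
    ENNReal.ofReal (1 - δ) < μ (⋃ x ∈ E, {y | bowenDist T n x y < ε}) := by
  have hcover : ⋃ x ∈ E, {y | bowenDist T n x y < ε} = univ := by
    refine eq_univ_of_forall fun x => ?_
    obtain ⟨y, hy, hxy⟩ := hE x (mem_univ x)
    exact mem_iUnion₂.2 ⟨y, hy, (bowenDist_comm T n y x).trans_lt hxy⟩
  rw [hcover, measure_univ]
  exact ENNReal.ofReal_lt_one.2 (by linarith)

lemma katokNum_le_spanNum (hX : TotallyBounded (univ : Set X)) (T : X → X) (n : ℕ) (hε : 0 < ε)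
    (hδ : 0 < δ) : katokNum T μ n ε δ ≤ spanNum T n ε univ := by
  obtain ⟨E, hcard, hE⟩ := exists_card_eq_spanNum hX T n hε
  exact Nat.sInf_le ⟨E, hcard, ofReal_one_sub_lt_measure_biUnion_bowenDist_lt hδ hE⟩

lemma exists_card_eq_katokNum (hX : TotallyBounded (univ : Set X)) (T : X → X) (n : ℕ)
    (hε : 0 < ε) (hδ : 0 < δ) :
    ∃ E : Finset X, E.card = katokNum T μ n ε δ ∧
      ENNReal.ofReal (1 - δ) < μ (⋃ x ∈ E, {y | bowenDist T n x y < ε}) := by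
  obtain ⟨E, -, hE⟩ := exists_card_eq_spanNum hX T n hε
  have hne : {k | ∃ E : Finset X, E.card = k ∧
      ENNReal.ofReal (1 - δ) < μ (⋃ x ∈ E, {y | bowenDist T n x y < ε})}.Nonempty :=
    ⟨_, E, rfl, ofReal_one_sub_lt_measure_biUnion_bowenDist_lt hδ hE⟩
  exact Nat.sInf_mem hne

lemma shadowRateLE_of_katokLower_lt (hX : TotallyBounded (univ : Set X)) (hε : 0 < ε)
    (h : katokLower T μ ε < ENNReal.ofReal c) : ShadowRateLE T μ ε c := by
  intro η hη
  let δ := min η (1 / 2)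
  have hδ : δ ∈ Ioo (0 : ℝ) 1 :=
    ⟨lt_min hη one_half_pos, (min_le_right _ _).trans_lt one_half_lt_one⟩
  have hc : 0 < c := ENNReal.ofReal_pos.1 (bot_le.trans_lt h)
  have hδ_lt : katokLowerD T μ ε δ < ENNReal.ofReal c :=
    (le_iSup₂_of_le (f := fun δ _ => katokLowerD T μ ε δ) δ hδ le_rfl).trans_lt h
  refine ((frequently_lt_of_liminf_lt (by isBoundedDefault) hδ_lt).and_eventually
    (eventually_gt_atTop 0)).mono fun n ⟨hlog, hn⟩ => ?_
  obtain ⟨E, hcard, hE⟩ := exists_card_eq_katokNum (μ := μ) hX T n hε hδ.1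
  refine ⟨_, (isShadowedBy_biUnion_bowenDist_lt hε E).mono Subset.rfl ?_, ?_⟩
  · rw [hcard]
    exact (ofReal_log_natCast_div_le_ofReal_iff hn hc.le).1 hlog.le
  · rw [ENNReal.ofReal_lt_iff_lt_toReal (sub_nonneg.2 hδ.2.le) (measure_ne_top _ _)] at hE
    exact (sub_le_sub_left (min_le_left _ _) 1).trans_lt hE

end KatokNumbers

section UpperLogRate

/-- The limsup of `F ε / log (1 / ε)` as `ε → 0⁺`. The upper metric mean dimension is
`upperLogRate (spanGrowth T)`, and both sides of the variational principle have this form. -/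
def upperLogRate (F : ℝ → ℝ≥0∞) : ℝ≥0∞ :=
  limsup (fun ε => F ε / ENNReal.ofReal (Real.log (1 / ε))) (𝓝[>] 0)

variable {F G : ℝ → ℝ≥0∞}

lemma upperLogRate_mono (h : ∀ ε > 0, F ε ≤ G ε) : upperLogRate F ≤ upperLogRate G := by
  refine limsup_le_limsup ?_
  filter_upwards [self_mem_nhdsWithin] with ε hε using ENNReal.div_le_div_right (h ε hε) _

lemma tendsto_log_one_div_nhdsGT_zero : Tendsto (fun ε : ℝ => Real.log (1 / ε)) (𝓝[>] 0) atTop := by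
  simp only [one_div]
  exact Real.tendsto_log_atTop.comp tendsto_inv_nhdsGT_zero

lemma tendsto_div_const_nhdsGT_zero {c : ℝ} (hc : 0 < c) :
    Tendsto (fun ε : ℝ => ε / c) (𝓝[>] 0) (𝓝[>] 0) := by
  refine tendsto_nhdsWithin_iff.2 ⟨?_, ?_⟩
  · exact ((continuous_id.div_const c).tendsto' 0 0 (zero_div c)).mono_left nhdsWithin_le_nhds
  · filter_upwards [self_mem_nhdsWithin] with ε hε using div_pos hε hc

lemma tendsto_log_one_div_div_log_one_div {c : ℝ} (hc : 0 < c) :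
    Tendsto (fun ε : ℝ => Real.log (1 / (ε / c)) / Real.log (1 / ε)) (𝓝[>] 0) (𝓝 1) := by
  have hlim : Tendsto (fun ε : ℝ => Real.log c / Real.log (1 / ε) + 1) (𝓝[>] 0) (𝓝 1) := by
    simpa using (tendsto_log_one_div_nhdsGT_zero.const_div_atTop (Real.log c)).add_const 1
  refine hlim.congr' ?_
  filter_upwards [self_mem_nhdsWithin, tendsto_log_one_div_nhdsGT_zero.eventually_gt_atTop 0]
    with ε hε hlog
  have hε : 0 < ε := hε
  rw [one_div_div, div_eq_mul_one_div c, Real.log_mul hc.ne' (by positivity), add_div,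
    div_self hlog.ne']

lemma upperLogRate_le_of_mul_le {c : ℝ} (hc : 0 < c) (h : ∀ ε > 0, F (c * ε) ≤ G ε) :
    upperLogRate F ≤ upperLogRate G := by
  let ratio : ℝ → ℝ≥0∞ := fun ε => ENNReal.ofReal (Real.log (1 / (ε / c)) / Real.log (1 / ε))
  let G' : ℝ → ℝ≥0∞ := fun ε => G ε / ENNReal.ofReal (Real.log (1 / ε))
  have hratio : limsup ratio (𝓝[>] 0) = 1 :=
    (ENNReal.tendsto_ofReal (tendsto_log_one_div_div_log_one_div hc)).limsup_eq.trans
      ENNReal.ofReal_one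
  have hle : (fun ε => F ε / ENNReal.ofReal (Real.log (1 / ε))) ≤ᶠ[𝓝[>] 0]
      ratio * fun ε => G' (ε / c) := by
    filter_upwards [self_mem_nhdsWithin, tendsto_log_one_div_nhdsGT_zero.eventually_gt_atTop 0,
      (tendsto_log_one_div_nhdsGT_zero.comp
        (tendsto_div_const_nhdsGT_zero hc)).eventually_gt_atTop 0] with ε hε hlog hlog'
    have hF : F ε ≤ G (ε / c) := by
      simpa only [mul_div_cancel₀ ε hc.ne'] using h (ε / c) (div_pos hε hc)
    calc F ε / ENNReal.ofReal (Real.log (1 / ε))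
        ≤ G (ε / c) / ENNReal.ofReal (Real.log (1 / ε)) := ENNReal.div_le_div_right hF _
      _ = ratio ε * G' (ε / c) := by
        simp only [ratio, G', ENNReal.ofReal_div_of_pos hlog, Function.comp_apply] at hlog' ⊢
        rw [mul_comm, ← mul_div_assoc,
          ENNReal.div_mul_cancel (ENNReal.ofReal_pos.2 hlog').ne' ENNReal.ofReal_ne_top]
  calc upperLogRate F ≤ limsup (ratio * fun ε => G' (ε / c)) (𝓝[>] 0) := limsup_le_limsup hle
    _ ≤ limsup ratio (𝓝[>] 0) * limsup (fun ε => G' (ε / c)) (𝓝[>] 0) :=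
      ENNReal.limsup_mul_le' (.inl (by simp [hratio])) (.inl (by simp [hratio]))
    _ = limsup (fun ε => G' (ε / c)) (𝓝[>] 0) := by rw [hratio, one_mul]
    _ ≤ upperLogRate G := limsup_le_limsup_of_le (u := G') (tendsto_div_const_nhdsGT_zero hc)

end UpperLogRate

section ErgodicKatok

variable {X : Type*} [PseudoMetricSpace X] [MeasurableSpace X] {ε : ℝ}

/-- The supremum of the lower Katok entropies at scale `ε` over all ergodic measures, the
numerator of the first variational formula. -/
def ergodicKatokLower (T : X → X) (ε : ℝ) : ℝ≥0∞ :=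
  ⨆ (μ : Measure X) (_ : IsProbabilityMeasure μ) (_ : Ergodic T μ), katokLower T μ ε

/-- The supremum of the upper Katok entropies at scale `ε` over all ergodic measures, the
numerator of the second variational formula. -/
def ergodicKatokUpper (T : X → X) (ε : ℝ) : ℝ≥0∞ :=
  ⨆ (μ : Measure X) (_ : IsProbabilityMeasure μ) (_ : Ergodic T μ), katokUpper T μ ε

lemma ergodicKatokLower_le_ergodicKatokUpper (T : X → X) (ε : ℝ) :
    ergodicKatokLower T ε ≤ ergodicKatokUpper T ε :=
  iSup_mono fun _ => iSup₂_mono fun _ _ => iSup₂_mono fun _ _ => liminf_le_limsup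

lemma ergodicKatokUpper_le_spanGrowth (hX : TotallyBounded (univ : Set X))
    (T : X → X) (hε : 0 < ε) : ergodicKatokUpper T ε ≤ spanGrowth T ε := by
  refine iSup_le fun μ => iSup₂_le fun _ _ => iSup₂_le fun δ hδ => ?_
  refine limsup_le_limsup (.of_forall fun n => ?_)
  have hle : Real.log (katokNum T μ n ε δ) ≤ Real.log (spanNum T n ε univ) :=
    monotone_log_natCast (katokNum_le_spanNum hX T n hε hδ.1)
  exact ENNReal.div_le_div_right (ENNReal.ofReal_le_ofReal hle) _

end ErgodicKatok

theorem spanGrowth_le_ergodicKatokLower {X : Type*} [MetricSpace X] [CompactSpace X]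
    [MeasurableSpace X] [BorelSpace X] {T : X → X} (hT : Continuous T) {ε : ℝ} (hε : 0 < ε) :
    spanGrowth T (2 * (2 * ε)) ≤ ergodicKatokLower T ε := by
  have hX : TotallyBounded (univ : Set X) := isCompact_univ.totallyBounded
  refine le_of_forall_gt_imp_ge_of_dense fun b hb => ?_
  obtain ⟨c, hc, hKc, hcb⟩ := ENNReal.lt_iff_exists_real_btwn.1 hb
  obtain ⟨c', hc', hcc', hc'b⟩ := ENNReal.lt_iff_exists_real_btwn.1 hcb
  obtain ⟨c'', hcc'', hc''c'⟩ := exists_between ((ENNReal.ofReal_lt_ofReal_iff_of_nonneg hc).1 hcc')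
  have hergodic (ν : Measure X) (_ : IsProbabilityMeasure ν) (hν : Ergodic T ν) :
      ShadowRateLE T ν ε c :=
    shadowRateLE_of_katokLower_lt hX hε <| lt_of_le_of_lt
      (le_iSup_of_le ν (le_iSup₂_of_le (f := fun _ _ => katokLower T ν ε) ‹_› hν le_rfl)) hKc
  have hinvariant (μ : Measure X) (_ : IsProbabilityMeasure μ) (hμ : MeasurePreserving T μ μ) :
      ShadowRateLE T μ (2 * ε) c'' :=
    shadowRateLE_of_forall_ergodic hX hε (by linarith) hc hcc'' hergodic hμ
  have huniv : ∀ᶠ n in atTop, IsShadowedBy T (2 * ε) n univ (Real.exp (c' * n)) :=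
    eventually_isShadowedBy_univ hT (by positivity) (hc.trans hcc''.le) hc''c' hinvariant
  exact (spanGrowth_le_of_eventually_isShadowedBy (by positivity) hc' huniv).trans hc'b.le

end MMD

/-- Theorem 3.3 (upper part): variational principles for the upper metric mean dimension in
terms of the lower and upper Katok entropies, over ergodic measures. -/
theorem stmt5 {X : Type*} [MetricSpace X] [CompactSpace X] [MeasurableSpace X] [BorelSpace X]
    (T : X → X) (hT : Continuous T) :
    mdimMUpper T = Filter.limsup (fun ε : ℝ =>
        (⨆ (μ : Measure X) (_ : IsProbabilityMeasure μ) (_ : Ergodic T μ), katokLower T μ ε)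
          / ENNReal.ofReal (Real.log (1 / ε))) (nhdsWithin 0 (Set.Ioi 0)) ∧
    mdimMUpper T = Filter.limsup (fun ε : ℝ =>
        (⨆ (μ : Measure X) (_ : IsProbabilityMeasure μ) (_ : Ergodic T μ), katokUpper T μ ε)
          / ENNReal.ofReal (Real.log (1 / ε))) (nhdsWithin 0 (Set.Ioi 0)) := by
  have hspan_lower : mdimMUpper T ≤ upperLogRate (ergodicKatokLower T) :=
    upperLogRate_le_of_mul_le (c := 4) (by norm_num) fun ε hε => by
      rw [show 4 * ε = 2 * (2 * ε) by ring]
      exact spanGrowth_le_ergodicKatokLower hT hε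
  have hlower_upper : upperLogRate (ergodicKatokLower T) ≤ upperLogRate (ergodicKatokUpper T) :=
    upperLogRate_mono fun ε _ => ergodicKatokLower_le_ergodicKatokUpper T ε
  have hupper_span : upperLogRate (ergodicKatokUpper T) ≤ mdimMUpper T :=
    upperLogRate_mono fun ε hε =>
      ergodicKatokUpper_le_spanGrowth isCompact_univ.totallyBounded T hε
  exact ⟨hspan_lower.antisymm (hlower_upper.trans hupper_span),
    (hspan_lower.trans hlower_upper).antisymm hupper_span⟩
end
end
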